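/- Let A be a finite algebra. Then every supernilpotent congruence of A (i.e., every α with [α,…,α]_n = 0_A for some n ≥ 2) is solvable. Consequently, if A is a finite supernilpotent algebra possessing a Taylor term, then A possesses a Mal'cev term and is nilpotent. -/

import Mathlib

set_option autoImplicit false

namespace UA

/-- A signature: a type of operation symbols, each with a finite arity. -/
structure Signature : Type 1 where
  ops : Type
  arity : ops → ℕ

/-- An algebra for a signature: a carrier set together with an interpretation
of every operation symbol. -/
structure Algebra (σ : Signature) : Type 1 where
  carrier : Type
  interp : (o : σ.ops) → (Fin (σ.arity o) → carrier) → carrier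

variable {σ : Signature}

/-- A congruence of an algebra: an equivalence relation compatible with all
basic operations. -/
structure Con (A : Algebra σ) : Type where
  r : A.carrier → A.carrier → Prop
  refl : ∀ a, r a a
  symm : ∀ {a b}, r a b → r b a
  trans : ∀ {a b c}, r a b → r b c → r a c
  compat : ∀ (o : σ.ops) (x y : Fin (σ.arity o) → A.carrier),
      (∀ i, r (x i) (y i)) → r (A.interp o x) (A.interp o y)

namespace Con

variable {A : Algebra σ}

instance : LE (Con A) := ⟨fun c d => ∀ a b : A.carrier, c.r a b → d.r a b⟩
instance : LT (Con A) := ⟨fun c d => c ≤ d ∧ ¬ d ≤ c⟩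

/-- The total congruence `1_A`. -/
def top : Con A where
  r := fun _ _ => True
  refl := fun _ => trivial
  symm := fun _ => trivial
  trans := fun _ _ => trivial
  compat := fun _ _ _ _ => trivial

/-- The identity congruence `0_A`. -/
def bot : Con A where
  r := fun a b => a = b
  refl := fun _ => rfl
  symm := fun h => h.symm
  trans := fun h h' => h.trans h'
  compat := fun o _ _ h => congrArg (A.interp o) (funext h)

/-- Meet of an arbitrary family of congruences (intersection). -/
def sInf (S : Set (Con A)) : Con A where
  r a b := ∀ c ∈ S, c.r a b
  refl a c _ := c.refl a
  symm h c hc := c.symm (h c hc)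
  trans h h' c hc := c.trans (h c hc) (h' c hc)
  compat o x y h c hc := c.compat o x y (fun i => h i c hc)

/-- Binary meet of congruences. -/
def inf (c d : Con A) : Con A where
  r a b := c.r a b ∧ d.r a b
  refl a := ⟨c.refl a, d.refl a⟩
  symm h := ⟨c.symm h.1, d.symm h.2⟩
  trans h h' := ⟨c.trans h.1 h'.1, d.trans h.2 h'.2⟩
  compat o x y h := ⟨c.compat o x y fun i => (h i).1, d.compat o x y fun i => (h i).2⟩

/-- The congruence generated by a set of pairs. -/
def conGen (S : Set (A.carrier × A.carrier)) : Con A :=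
  sInf {c : Con A | ∀ p ∈ S, c.r p.1 p.2}

/-- Binary join of congruences. -/
def sup (c d : Con A) : Con A := conGen {p | c.r p.1 p.2 ∨ d.r p.1 p.2}

/-- Join of a family of congruences. -/
def iSup {I : Type} (f : I → Con A) : Con A := conGen {p | ∃ i, (f i).r p.1 p.2}

/-- Composition of congruences as binary relations. -/
def comp (c d : Con A) (a b : A.carrier) : Prop := ∃ x, c.r a x ∧ d.r x b

/-- `d` covers `c` in the congruence lattice. -/
def Covers (c d : Con A) : Prop := c < d ∧ ∀ e : Con A, c < e → e ≤ d → e = d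

theorem le_sup_right {c d : Con A} : d ≤ sup c d :=
  fun a b h e he => he (a, b) (Or.inr h)

def toSetoid (c : Con A) : Setoid A.carrier := ⟨c.r, ⟨c.refl, c.symm, c.trans⟩⟩

end Con

/-- The quotient algebra `A/γ`. -/
noncomputable def quotAlg (A : Algebra σ) (γ : Con A) : Algebra σ where
  carrier := Quotient γ.toSetoid
  interp o x := Quotient.mk γ.toSetoid (A.interp o (fun i => (x i).out))

/-- The quotient congruence `α/γ` for `γ ≤ α`. -/
noncomputable def Con.quot {A : Algebra σ} (α γ : Con A) (h : γ ≤ α) : Con (quotAlg A γ) where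
  r x y := Quotient.liftOn₂ x y (fun a b => α.r a b)
    (fun a b a' b' ha hb => propext
      ⟨fun hr => α.trans (α.symm (h _ _ ha)) (α.trans hr (h _ _ hb)),
       fun hr => α.trans (h _ _ ha) (α.trans hr (α.symm (h _ _ hb)))⟩)
  refl x := Quotient.inductionOn x fun a => α.refl a
  symm {x y} h' := Quotient.inductionOn₂ x y (fun _ _ hab => α.symm hab) h'
  trans {x y z} h1 h2 :=
    Quotient.inductionOn₃ x y z (fun _ _ _ hab hbc => α.trans hab hbc) h1 h2
  compat o x y hxy := by
    show α.r (A.interp o fun i => (x i).out) (A.interp o fun i => (y i).out)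
    refine α.compat o _ _ fun i => ?_
    have h1 := hxy i
    rw [← Quotient.out_eq (x i), ← Quotient.out_eq (y i)] at h1
    exact h1

/-- The polynomial operations of an algebra: the clone generated by the basic
operations, the projections and the constants. -/
inductive IsPolynomial (A : Algebra σ) : {n : ℕ} → ((Fin n → A.carrier) → A.carrier) → Prop
  | proj {n : ℕ} (i : Fin n) : IsPolynomial A (fun x => x i)
  | const {n : ℕ} (a : A.carrier) : IsPolynomial A (fun _ : Fin n → A.carrier => a)
  | app {n : ℕ} (o : σ.ops) (g : Fin (σ.arity o) → (Fin n → A.carrier) → A.carrier) :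
      (∀ j, IsPolynomial A (g j)) → IsPolynomial A (fun x => A.interp o (fun j => g j x))

/-- Substituting, coordinatewise according to the grouping `g` and the choice
vector `ε`, the entries of `b` (where `ε` is `true`) or of `a` (where `ε` is `false`). -/
def chooseVec {β : Type} {N n : ℕ} (g : Fin N → Fin n) (a b : Fin N → β)
    (ε : Fin n → Bool) : Fin N → β :=
  fun i => if ε (g i) then b i else a i

/-- The higher centralizer relation `C(α₁,…,αₙ,β;δ)` of Bulatov.  Polynomials with
grouped variables are modelled by a polynomial `p` of arity `N` together with a
grouping map `g : Fin N → Fin (n+1)`; the group `Fin.last n` is the `β`-group. -/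
def Centralizes {A : Algebra σ} {n : ℕ} (α : Fin n → Con A) (β δ : Con A) : Prop :=
  ∀ (N : ℕ) (p : (Fin N → A.carrier) → A.carrier), IsPolynomial A p →
    ∀ (g : Fin N → Fin (n + 1)) (a b : Fin N → A.carrier),
      (∀ i, (Fin.lastCases (motive := fun _ => Con A) β α (g i)).r (a i) (b i)) →
      (∀ ε : Fin n → Bool, ε ≠ (fun _ => true) →
        δ.r (p (chooseVec g a b (Fin.lastCases (motive := fun _ => Bool) false ε)))
            (p (chooseVec g a b (Fin.lastCases (motive := fun _ => Bool) true ε)))) →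
      δ.r (p (chooseVec g a b (Fin.lastCases (motive := fun _ => Bool) false fun _ => true)))
          (p (chooseVec g a b (Fin.lastCases (motive := fun _ => Bool) true fun _ => true)))

/-- The higher commutator `[α₁,…,αₙ,β]`: the smallest congruence `δ` such that
`C(α₁,…,αₙ,β;δ)` holds. -/
def commutator {A : Algebra σ} {n : ℕ} (α : Fin n → Con A) (β : Con A) : Con A :=
  Con.sInf {δ : Con A | Centralizes α β δ}

/-- The higher commutator of a nonempty list of congruences, with the convention
`[α] = α` for a single congruence. -/
def commList {A : Algebra σ} : {n : ℕ} → (Fin (n + 1) → Con A) → Con A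
  | 0, γ => γ 0
  | (n+1), γ => commutator (fun j : Fin (n+1) => γ j.castSucc) (γ (Fin.last (n+1)))

/-- The `m`-fold commutator `[θ,…,θ]_m` (for `m ≥ 1`). -/
def nfold {A : Algebra σ} (θ : Con A) (m : ℕ) : Con A :=
  commList (fun _ : Fin (m - 1 + 1) => θ)

/-- The binary commutator `[c,d]`. -/
def binComm {A : Algebra σ} (c d : Con A) : Con A := commutator (fun _ : Fin 1 => c) d

/-- The lower central series `(θ]ⁿ`. -/
def lcs {A : Algebra σ} (θ : Con A) : ℕ → Con A
  | 0 => θ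
  | (k+1) => binComm θ (lcs θ k)

/-- The derived series `[θ]ⁿ`. -/
def derived {A : Algebra σ} (θ : Con A) : ℕ → Con A
  | 0 => θ
  | (k+1) => binComm (derived θ k) (derived θ k)

/-- An algebra is nilpotent if some term of the lower central series of `1_A` is `0_A`. -/
def Nilpotent (A : Algebra σ) : Prop := ∃ m, lcs (Con.top : Con A) m = Con.bot

/-- An algebra is nilpotent of class `n` if `(1_A]ⁿ = 0_A`. -/
def NilpotentOfClass (A : Algebra σ) (n : ℕ) : Prop := lcs (Con.top : Con A) n = Con.bot

/-- A congruence is solvable if some term of its derived series is `0_A`. -/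
def SolvableCon {A : Algebra σ} (θ : Con A) : Prop := ∃ m, derived θ m = Con.bot

/-- `A` is `n`-supernilpotent if `[1_A,…,1_A]_n = 0_A`. -/
def Supernilpotent (A : Algebra σ) (n : ℕ) : Prop := nfold (Con.top : Con A) n = Con.bot

/-- A polynomial `f` absorbs the tuple `a` to the element `c`. -/
def Absorbs (A : Algebra σ) {k : ℕ} (f : (Fin k → A.carrier) → A.carrier)
    (a : Fin k → A.carrier) (c : A.carrier) : Prop :=
  ∀ b : Fin k → A.carrier, (∃ i, b i = a i) → f b = c

/-- Terms over a signature with variables in `X`. -/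
inductive Term (σ : Signature) (X : Type) : Type
  | var : X → Term σ X
  | app : (o : σ.ops) → (Fin (σ.arity o) → Term σ X) → Term σ X

/-- Evaluation of a term in an algebra under an assignment of the variables. -/
def Term.eval {X : Type} (A : Algebra σ) (v : X → A.carrier) : Term σ X → A.carrier
  | Term.var x => v x
  | Term.app o t => A.interp o fun i => Term.eval A v (t i)

/-- Substitution of terms into a term. -/
def Term.subst {X Y : Type} : Term σ X → (X → Term σ Y) → Term σ Y
  | Term.var x, s => s x
  | Term.app o t, s => Term.app o fun i => Term.subst (t i) s

/-- `A` possesses a Mal'cev term. -/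
def HasMalcevTerm (A : Algebra σ) : Prop :=
  ∃ t : Term σ (Fin 3), ∀ a b : A.carrier,
    t.eval A ![a, b, b] = a ∧ t.eval A ![b, b, a] = a

/-- A class of algebras is a variety when it is the class of all models of a set
of identities. -/
def IsVariety (V : Algebra σ → Prop) : Prop :=
  ∃ E : Set (Term σ ℕ × Term σ ℕ),
    ∀ A : Algebra σ, V A ↔ ∀ e ∈ E, ∀ v : ℕ → A.carrier, e.1.eval A v = e.2.eval A v

/-- Two terms are `V`-equivalent when they evaluate equally in every member of `V`. -/
def vSetoid (V : Algebra σ → Prop) (X : Type) : Setoid (Term σ X) where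
  r t s := ∀ A : Algebra σ, V A → ∀ v : X → A.carrier, t.eval A v = s.eval A v
  iseqv := ⟨fun _ _ _ _ => rfl, fun h A hA v => (h A hA v).symm,
    fun h h' A hA v => (h A hA v).trans (h' A hA v)⟩

/-- The `V`-free algebra on the set `X` of generators. -/
noncomputable def freeAlg (V : Algebra σ → Prop) (X : Type) : Algebra σ where
  carrier := Quotient (vSetoid V X)
  interp o x := Quotient.mk (vSetoid V X) (Term.app o fun i => (x i).out)

/-- The principal congruence `θ(a,b)` generated by the pair `(a,b)`. -/
def conPair (A : Algebra σ) (a b : A.carrier) : Con A := Con.conGen {(a, b)}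

/-- A weak difference term for the class `V`. -/
def IsWeakDiffTerm (V : Algebra σ → Prop) (c : Term σ (Fin 3)) : Prop :=
  ∀ A : Algebra σ, V A → ∀ a b : A.carrier,
    (binComm (conPair A a b) (conPair A a b)).r (c.eval A ![a, b, b]) a ∧
    (binComm (conPair A a b) (conPair A a b)).r a (c.eval A ![b, b, a])

/-- A weak `n`-difference term for the class `V`. -/
def IsWeakNDiffTerm (V : Algebra σ → Prop) (n : ℕ) (c : Term σ (Fin 3)) : Prop :=
  ∀ A : Algebra σ, V A → ∀ a b : A.carrier,
    (nfold (conPair A a b) n).r (c.eval A ![a, b, b]) a ∧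
    (nfold (conPair A a b) n).r a (c.eval A ![b, b, a])

/-- Order-preserving maps on the congruence lattice. -/
def MonotoneCon {A : Algebra σ} (F : Con A → Con A) : Prop :=
  ∀ c d : Con A, c ≤ d → F c ≤ F d

/-- `p` is a weak `f`-term of `A` with respect to the interpretation `F`. -/
def IsWeakFTerm (A : Algebra σ) (F : Con A → Con A) (p : Term σ (Fin 3)) : Prop :=
  ∀ (θ : Con A) (a b : A.carrier), θ.r a b →
    (F θ).r (p.eval A ![a, b, b]) a ∧ (F θ).r a (p.eval A ![b, b, a])

/-- `p` is a weak `f`-term for the class `V`. -/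
def HasWeakFTermVariety (V : Algebra σ → Prop) (p : Term σ (Fin 3)) : Prop :=
  ∀ A : Algebra σ, V A → ∃ F : Con A → Con A, MonotoneCon F ∧ IsWeakFTerm A F p

/-- The set `T^θ_{n,f}(θ₁,…,θₙ)` of pairs coming from polynomials which
`f(θ)`-absorb on the cube `{ā₁,b̄₁}×⋯×{āₙ,b̄ₙ}`. -/
def TSet (A : Algebra σ) (F : Con A → Con A) (θ : Con A) {n : ℕ} (θs : Fin n → Con A) :
    Set (A.carrier × A.carrier) :=
  {pr | ∃ (N : ℕ) (g : (Fin N → A.carrier) → A.carrier), IsPolynomial A g ∧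
    ∃ (gr : Fin N → Fin n) (a b : Fin N → A.carrier),
      (∀ i, (θs (gr i)).r (a i) (b i)) ∧
      (∀ ε : Fin n → Bool, (∃ j, ε j = false) →
        (F θ).r (g (fun i => if ε (gr i) then b i else a i)) (g a)) ∧
      pr = (g b, g a)}

/-- Homomorphisms of algebras. -/
def IsHom (A B : Algebra σ) (h : A.carrier → B.carrier) : Prop :=
  ∀ (o : σ.ops) (x : Fin (σ.arity o) → A.carrier),
    h (A.interp o x) = B.interp o (fun i => h (x i))

/-- The product of a family of algebras. -/
def prodAlg {I : Type} (As : I → Algebra σ) : Algebra σ where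
  carrier := ∀ i, (As i).carrier
  interp o x i := (As i).interp o (fun j => x j i)

/-- The subuniverse generated by a subset. -/
inductive Gen (A : Algebra σ) (S : Set A.carrier) : A.carrier → Prop
  | base {a : A.carrier} : a ∈ S → Gen A S a
  | app (o : σ.ops) (x : Fin (σ.arity o) → A.carrier) :
      (∀ i, Gen A S (x i)) → Gen A S (A.interp o x)

/-- `A` possesses a Taylor term. -/
def HasTaylorTerm (A : Algebra σ) : Prop :=
  ∃ (n : ℕ) (t : Term σ (Fin n)), 1 ≤ n ∧
    (∀ a : A.carrier, t.eval A (fun _ => a) = a) ∧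
    ∀ i : Fin n, ∃ u v : Fin n → Bool, u i = true ∧ v i = false ∧
      ∀ x y : A.carrier,
        t.eval A (fun j => if u j then x else y) = t.eval A (fun j => if v j then x else y)

/-- The variety `V` possesses a Taylor term. -/
def VarietyHasTaylorTerm (V : Algebra σ → Prop) : Prop :=
  ∃ (n : ℕ) (t : Term σ (Fin n)), 1 ≤ n ∧
    (∀ A : Algebra σ, V A → ∀ a : A.carrier, t.eval A (fun _ => a) = a) ∧
    ∀ i : Fin n, ∃ u v : Fin n → Bool, u i = true ∧ v i = false ∧
      ∀ A : Algebra σ, V A → ∀ x y : A.carrier,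
        t.eval A (fun j => if u j then x else y) = t.eval A (fun j => if v j then x else y)

/-- `Ξ(θ)`: the smallest set of congruences containing `θ` and closed under
higher commutators (of arity at least 2) of its members. -/
inductive Xi {A : Algebra σ} (θ : Con A) : Con A → Prop
  | base : Xi θ θ
  | comm {k : ℕ} (γ : Fin (k + 2) → Con A) : (∀ j, Xi θ (γ j)) → Xi θ (commList γ)

/-- An expanded loop on the carrier `α` with extra operations indexed by `ι`. -/
structure ExpLoop (ι : Type) (ar : ι → ℕ) (α : Type) : Type where
  mul : α → α → α
  ldiv : α → α → α
  rdiv : α → α → α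
  zero : α
  extra : (i : ι) → (Fin (ar i) → α) → α
  ldiv_mul : ∀ x y, ldiv x (mul x y) = y
  mul_rdiv : ∀ x y, rdiv (mul x y) y = x
  mul_ldiv : ∀ x y, mul x (ldiv x y) = y
  rdiv_mul : ∀ x y, mul (rdiv x y) y = x
  zero_mul : ∀ x, mul zero x = x
  mul_zero : ∀ x, mul x zero = x

/-- Operation symbols of an expanded loop. -/
inductive LoopOp (ι : Type) : Type
  | mul | ldiv | rdiv | zero
  | extra : ι → LoopOp ι

/-- The signature of an expanded loop. -/
@[reducible] def loopSig (ι : Type) (ar : ι → ℕ) : Signature where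
  ops := LoopOp ι
  arity o := match o with
    | .mul => 2
    | .ldiv => 2
    | .rdiv => 2
    | .zero => 0
    | .extra i => ar i

/-- The algebra underlying an expanded loop. -/
def ExpLoop.toAlgebra {ι : Type} {ar : ι → ℕ} {α : Type} (L : ExpLoop ι ar α) :
    Algebra (loopSig ι ar) where
  carrier := α
  interp o := match o with
    | .mul => fun x => L.mul (x 0) (x 1)
    | .ldiv => fun x => L.ldiv (x 0) (x 1)
    | .rdiv => fun x => L.rdiv (x 0) (x 1)
    | .zero => fun _ => L.zero
    | .extra i => L.extra i

/-- An expanded loop is of `n`-type. -/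
def ExpLoop.IsNType {ι : Type} {ar : ι → ℕ} {α : Type} (L : ExpLoop ι ar α) (n : ℕ) : Prop :=
  (∀ p : Σ k : ℕ, (Fin k → α) → α,
      (∃ i : ι, p = ⟨ar i, L.extra i⟩) ↔
        (1 ≤ p.1 ∧ p.1 ≤ n - 1 ∧ IsPolynomial L.toAlgebra p.2 ∧
          Absorbs L.toAlgebra p.2 (fun _ => L.zero) L.zero)) ∧
  (∀ f : (Fin (n - 1) → α) → α,
      IsPolynomial L.toAlgebra f → Absorbs L.toAlgebra f (fun _ => L.zero) L.zero →
      ∀ (j : Fin (n - 1)) (x : Fin (n - 1) → α) (u v : α),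
        f (Function.update x j (L.mul u v)) =
          L.mul (f (Function.update x j u)) (f (Function.update x j v))) ∧
  (∀ k : ℕ, 2 ≤ k → k < n →
      commList (Fin.snoc (fun _ : Fin (n - k) => (Con.top : Con L.toAlgebra))
        (nfold Con.top k)) = Con.bot)

/-- `A` is polynomially equivalent to an `n`-type expanded loop on the same carrier. -/
def PolyEquivNTypeLoop (A : Algebra σ) (n : ℕ) : Prop :=
  ∃ (ι : Type) (ar : ι → ℕ) (L : ExpLoop ι ar A.carrier),
    L.IsNType n ∧
    ∀ (k : ℕ) (f : (Fin k → A.carrier) → A.carrier),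
      IsPolynomial A f ↔ IsPolynomial L.toAlgebra f

/-- Left-associated product of a list with initial value `c`. -/
def lprodFrom {β : Type} (mul : β → β → β) (c : β) (l : List β) : β := List.foldl mul c l

/-- Left-associated product of a list (with a default value for the empty list). -/
def lprodList {β : Type} (mul : β → β → β) (dflt : β) : List β → β
  | [] => dflt
  | a :: l => List.foldl mul a l

/-- Left-associated product of a nonempty tuple. -/
def lassoc {β : Type} (mul : β → β → β) : {m : ℕ} → (Fin (m + 1) → β) → β
  | 0, y => y 0
  | (m+1), y => mul (lassoc mul (Fin.init y)) (y (Fin.last (m+1)))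

/-- `A` has a representation of degree `n`. -/
def HasRepOfDegree (A : Algebra σ) (n : ℕ) : Prop :=
  ∃ (z : A.carrier) (r : (Fin 2 → A.carrier) → A.carrier),
    IsPolynomial A r ∧ (∀ x : A.carrier, r ![z, x] = x) ∧ (∀ x : A.carrier, r ![x, z] = x) ∧
    ∀ (k : ℕ) (f : (Fin k → A.carrier) → A.carrier), IsPolynomial A f →
      ∃ (c : A.carrier) (R : ℕ → (Fin k → A.carrier) → A.carrier),
        (∀ m : ℕ, 1 ≤ m → m ≤ min k n →
          ∃ (l : List (Finset (Fin k)))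
            (t : (S : Finset (Fin k)) → (Fin S.card → A.carrier) → A.carrier),
            l.Nodup ∧
            (∀ S : Finset (Fin k), S ∈ l ↔ S.card = m) ∧
            (∀ S ∈ l, IsPolynomial A (t S) ∧ Absorbs A (t S) (fun _ => z) z) ∧
            (∀ x : Fin k → A.carrier,
              R m x = lprodList (fun u v => r ![u, v]) z
                (l.map (fun S => t S (fun j => x ((S.orderIsoOfFin rfl j).val)))))) ∧
        ∀ x : Fin k → A.carrier,
          f x = lprodFrom (fun u v => r ![u, v]) c
            ((List.range' 1 (min k n)).map (fun m => R m x))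

/-- Products of `0`-absorbing polynomials (of arities between `lo` and `hi`)
in a given set of variables. -/
inductive ProdOfAbs {ι : Type} {ar : ι → ℕ} {α : Type} (L : ExpLoop ι ar α)
    (lo hi : ℕ) {I : Type} : ((I → α) → α) → Prop
  | base {p : ℕ} (h : (Fin p → α) → α) (sel : Fin p → I) :
      lo ≤ p → p ≤ hi → IsPolynomial L.toAlgebra h →
      Absorbs L.toAlgebra h (fun _ => L.zero) L.zero →
      ProdOfAbs L lo hi (fun v => h (fun j => v (sel j)))
  | mul {F G : (I → α) → α} :
      ProdOfAbs L lo hi F → ProdOfAbs L lo hi G →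
      ProdOfAbs L lo hi (fun v => L.mul (F v) (G v))

/-- The terms `q_m` (for `m ≥ 2`, `qSeq q (m-2)` is `q_m`):
`q₂ := q`, `q_{m+1}(x,y,z) := q(x, q_m(x,y,y), q_m(x,y,z))`. -/
def qSeq (q : Term σ (Fin 3)) : ℕ → Term σ (Fin 3)
  | 0 => q
  | (k+1) => q.subst ![Term.var 0, (qSeq q k).subst ![Term.var 0, Term.var 1, Term.var 1], qSeq q k]




/-! ## Twin polynomials -/

/-- `Tw A R f f'`: the operations `f`, `f'` arise from a common term by plugging in
constants which are coordinatewise `R`-related. -/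
inductive Tw (A : Algebra σ) (R : A.carrier → A.carrier → Prop) {X : Type} :
    ((X → A.carrier) → A.carrier) → ((X → A.carrier) → A.carrier) → Prop
  | proj (x : X) : Tw A R (fun v => v x) (fun v => v x)
  | const {c d : A.carrier} : R c d → Tw A R (fun _ => c) (fun _ => d)
  | app (o : σ.ops) (g g' : Fin (σ.arity o) → (X → A.carrier) → A.carrier) :
      (∀ j, Tw A R (g j) (g' j)) →
      Tw A R (fun v => A.interp o (fun j => g j v)) (fun v => A.interp o (fun j => g' j v))

section TwBasic

variable {A : Algebra σ} {R S : A.carrier → A.carrier → Prop} {X Y : Type}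

theorem Tw.mono {f f' : (X → A.carrier) → A.carrier} (h : Tw A R f f')
    (hRS : ∀ a b, R a b → S a b) : Tw A S f f' := by
  induction h with
  | proj x => exact Tw.proj x
  | const h => exact Tw.const (hRS _ _ h)
  | app o g g' _ ih => exact Tw.app o g g' ih

theorem Tw.symm {f f' : (X → A.carrier) → A.carrier} (h : Tw A R f f')
    (hR : ∀ a b, R a b → R b a) : Tw A R f' f := by
  induction h with
  | proj x => exact Tw.proj x
  | const h => exact Tw.const (hR _ _ h)
  | app o g g' _ ih => exact Tw.app o g' g ih

theorem Tw.left {f f' : (X → A.carrier) → A.carrier} (h : Tw A R f f') : Tw A Eq f f := by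
  induction h with
  | proj x => exact Tw.proj x
  | const h => exact Tw.const rfl
  | app o g g' _ ih => exact Tw.app o g g ih

theorem Tw.right {f f' : (X → A.carrier) → A.carrier} (h : Tw A R f f') : Tw A Eq f' f' := by
  induction h with
  | proj x => exact Tw.proj x
  | const h => exact Tw.const rfl
  | app o g g' _ ih => exact Tw.app o g' g' ih

theorem Tw.subst {F F' : (Y → A.carrier) → A.carrier} (h : Tw A R F F')
    {G G' : Y → (X → A.carrier) → A.carrier} (hG : ∀ y, Tw A R (G y) (G' y)) :
    Tw A R (fun v => F (fun y => G y v)) (fun v => F' (fun y => G' y v)) := by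
  induction h with
  | proj x => exact hG x
  | const h => exact Tw.const h
  | app o g g' _ ih => exact Tw.app o _ _ ih

theorem Tw.rel {β : Con A} {f f' : (X → A.carrier) → A.carrier} (h : Tw A β.r f f')
    {v v' : X → A.carrier} (hv : ∀ x, β.r (v x) (v' x)) : β.r (f v) (f' v') := by
  induction h with
  | proj x => exact hv x
  | const h => exact h
  | app o g g' _ ih => exact β.compat o _ _ ih

/-- Polynomials are twins of themselves with respect to every congruence. -/
theorem Tw.ofPol {f f' : (X → A.carrier) → A.carrier} (h : Tw A Eq f f') (β : Con A) :
    Tw A β.r f f' := h.mono (fun a b e => e ▸ β.refl a)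

theorem Tw.constC (β : Con A) (c : A.carrier) : Tw A β.r (X := X) (fun _ => c) (fun _ => c) :=
  Tw.const (β.refl c)

theorem Tw.ofTerm {f f' : (X → A.carrier) → A.carrier} (h : Tw A (fun _ _ => False) f f') :
    Tw A R f f' := h.mono (fun _ _ e => e.elim)

/-- Iteration in one distinguished argument. -/
theorem Tw.iter {F F' : (X → A.carrier) → A.carrier → A.carrier}
    (hF : ∀ a a' : (X → A.carrier) → A.carrier, Tw A R a a' →
      Tw A R (fun v => F v (a v)) (fun v => F' v (a' v))) (k : ℕ)
    {a a' : (X → A.carrier) → A.carrier} (ha : Tw A R a a') :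
    Tw A R (fun v => (F v)^[k] (a v)) (fun v => (F' v)^[k] (a' v)) := by
  induction k with
  | zero => exact ha
  | succ k ih =>
    simp only [Function.iterate_succ_apply']
    exact hF _ _ ih

/-- Unary version. -/
def Tw1 (A : Algebra σ) (R : A.carrier → A.carrier → Prop) (f f' : A.carrier → A.carrier) : Prop :=
  Tw A R (X := Unit) (fun v => f (v ())) (fun v => f' (v ()))

/-- Binary version. -/
def Tw2 (A : Algebra σ) (R : A.carrier → A.carrier → Prop)
    (f f' : A.carrier → A.carrier → A.carrier) : Prop :=
  Tw A R (X := Fin 2) (fun v => f (v 0) (v 1)) (fun v => f' (v 0) (v 1))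

/-- Ternary version. -/
def Tw3 (A : Algebra σ) (R : A.carrier → A.carrier → Prop)
    (f f' : A.carrier → A.carrier → A.carrier → A.carrier) : Prop :=
  Tw A R (X := Fin 3) (fun v => f (v 0) (v 1) (v 2)) (fun v => f' (v 0) (v 1) (v 2))

theorem Tw1.ap {f f' : A.carrier → A.carrier} (h : Tw1 A R f f')
    {a a' : (X → A.carrier) → A.carrier} (ha : Tw A R a a') :
    Tw A R (fun v => f (a v)) (fun v => f' (a' v)) :=
  Tw.subst h (G := fun _ => a) (G' := fun _ => a') (fun _ => ha)

theorem Tw2.ap {f f' : A.carrier → A.carrier → A.carrier} (h : Tw2 A R f f')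
    {a a' b b' : (X → A.carrier) → A.carrier} (ha : Tw A R a a') (hb : Tw A R b b') :
    Tw A R (fun v => f (a v) (b v)) (fun v => f' (a' v) (b' v)) :=
  Tw.subst h (G := ![a, b]) (G' := ![a', b']) (fun i => by fin_cases i <;> assumption)

theorem Tw3.ap {f f' : A.carrier → A.carrier → A.carrier → A.carrier} (h : Tw3 A R f f')
    {a a' b b' c c' : (X → A.carrier) → A.carrier} (ha : Tw A R a a') (hb : Tw A R b b')
    (hc : Tw A R c c') :
    Tw A R (fun v => f (a v) (b v) (c v)) (fun v => f' (a' v) (b' v) (c' v)) :=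
  Tw.subst h (G := ![a, b, c]) (G' := ![a', b', c']) (fun i => by fin_cases i <;> assumption)

theorem Tw1.comp {f f' g g' : A.carrier → A.carrier} (hf : Tw1 A R f f') (hg : Tw1 A R g g') :
    Tw1 A R (fun x => f (g x)) (fun x => f' (g' x)) := Tw1.ap hf hg

theorem Tw1.id : Tw1 A R (fun x => x) (fun x => x) := Tw.proj ()

theorem Tw1.iter {f f' : A.carrier → A.carrier} (hf : Tw1 A R f f') (k : ℕ) :
    Tw1 A R (f^[k]) (f'^[k]) :=
  Tw.iter (X := Unit) (F := fun _ => f) (F' := fun _ => f') (fun _ _ ha => hf.ap ha) k (Tw.proj ())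

theorem Tw1.rel {β : Con A} {f f' : A.carrier → A.carrier} (h : Tw1 A β.r f f')
    {a b : A.carrier} (hab : β.r a b) : β.r (f a) (f' b) :=
  Tw.rel h (v := fun _ => a) (v' := fun _ => b) (fun _ => hab)

theorem Tw1.left {f f' : A.carrier → A.carrier} (h : Tw1 A R f f') : Tw1 A Eq f f := Tw.left h

theorem Tw1.right {f f' : A.carrier → A.carrier} (h : Tw1 A R f f') : Tw1 A Eq f' f' := Tw.right h

theorem Tw1.symm {f f' : A.carrier → A.carrier} (h : Tw1 A R f f')
    (hR : ∀ a b, R a b → R b a) : Tw1 A R f' f := Tw.symm h hR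

theorem Tw1.mono {f f' : A.carrier → A.carrier} (h : Tw1 A R f f')
    (hRS : ∀ a b, R a b → S a b) : Tw1 A S f f' := Tw.mono h hRS

theorem Tw1.ofPol {f f' : A.carrier → A.carrier} (h : Tw1 A Eq f f') (β : Con A) :
    Tw1 A β.r f f' := Tw.ofPol h β

/-- polynomials preserve congruences -/
theorem Tw1.pres {f : A.carrier → A.carrier} (h : Tw1 A Eq f f) (β : Con A)
    {a b : A.carrier} (hab : β.r a b) : β.r (f a) (f b) :=
  Tw1.rel (β := β) (Tw.ofPol h β) hab

/-- A twin pair of terms is a single term. -/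
theorem Tw.exists_term {f f' : (X → A.carrier) → A.carrier}
    (h : Tw A (fun _ _ => False) f f') : ∃ t : Term σ X, ∀ v, t.eval A v = f v := by
  induction h with
  | proj x => exact ⟨Term.var x, fun v => rfl⟩
  | const h => exact h.elim
  | app o g g' _ ih =>
    choose t ht using ih
    refine ⟨Term.app o t, fun v => ?_⟩
    simp only [Term.eval]
    congr 1
    funext j
    exact ht j v

theorem Tw.of_term (t : Term σ X) :
    Tw A R (fun v => t.eval A v) (fun v => t.eval A v) := by
  induction t with
  | var x => exact Tw.proj x
  | app o t ih => exact Tw.app o _ _ ih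

/-- Polynomials are terms with constants plugged in; the constants are indexed by themselves. -/
theorem Tw.exists_param {f f' : (X → A.carrier) → A.carrier} (h : Tw A Eq f f') :
    ∃ P : (X → A.carrier) → (A.carrier → A.carrier) → A.carrier,
      Tw A (fun _ _ => False) (X := X ⊕ A.carrier)
        (fun v => P (fun x => v (Sum.inl x)) (fun a => v (Sum.inr a)))
        (fun v => P (fun x => v (Sum.inl x)) (fun a => v (Sum.inr a))) ∧
      ∀ v, f v = P v (fun a => a) := by
  induction h with
  | proj x => exact ⟨fun v _ => v x, Tw.proj (Sum.inl x), fun v => rfl⟩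
  | @const c d h => exact ⟨fun _ w => w c, Tw.proj (Sum.inr c), fun v => rfl⟩
  | app o g g' _ ih =>
    choose P hP hP' using ih
    refine ⟨fun v w => A.interp o (fun j => P j v w), Tw.app o _ _ hP, fun v => ?_⟩
    simp only [hP']

theorem Tw.of_isPolynomial {n : ℕ} {p : (Fin n → A.carrier) → A.carrier} (h : IsPolynomial A p) :
    Tw A Eq p p := by
  induction h with
  | proj i => exact Tw.proj i
  | const a => exact Tw.const rfl
  | app o g _ ih => exact Tw.app o _ _ ih

end TwBasic

/-! ## Finite iteration -/

theorem exists_idem_one {B : Type} [Finite B] (h : B → B) :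
    ∃ k, 0 < k ∧ ∀ x, h^[k] (h^[k] x) = h^[k] x := by
  obtain ⟨i, j, hij, he⟩ := Finite.exists_ne_map_eq_of_infinite (fun i : ℕ => h^[i + 1])
  wlog hlt : i < j generalizing i j
  · exact this j i hij.symm he.symm (by omega)
  obtain ⟨p, rfl⟩ : ∃ p, j = i + p := ⟨j - i, by omega⟩
  have hp : 0 < p := by omega
  have he : h^[i + 1] = h^[i + p + 1] := he
  have step : ∀ m, i + 1 ≤ m → ∀ q, h^[m + q * p] = h^[m] := by
    intro m hm q
    induction q with
    | zero => simp
    | succ q ih =>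
      obtain ⟨r, rfl⟩ : ∃ r, m = (i + 1) + r := ⟨m - (i+1), by omega⟩
      have : i + 1 + r + (q + 1) * p = (r + q * p) + (i + p + 1) := by ring
      rw [this, Function.iterate_add, ← he, ← Function.iterate_add, ← ih]
      congr 1
      ring
  refine ⟨(i + 1) * p, by positivity, fun x => ?_⟩
  rw [← Function.iterate_add_apply, step _ (Nat.le_mul_of_pos_right _ hp)]

theorem idem_mul {B : Type} (h : B → B) (k : ℕ) (hk : ∀ x, h^[k] (h^[k] x) = h^[k] x) (m : ℕ)
    (hm : 0 < m) : h^[k * m] = h^[k] := by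
  induction m with
  | zero => omega
  | succ m ih =>
    rcases Nat.eq_zero_or_pos m with rfl | hm'
    · simp
    · rw [Nat.mul_succ, Function.iterate_add, ih hm']
      funext x
      exact hk x

/-- A uniform exponent making every self-map idempotent. -/
theorem exists_idem (B : Type) [Finite B] :
    ∃ k, ∀ (h : B → B) (x : B), h^[k + 1] (h^[k + 1] x) = h^[k + 1] x := by
  classical
  have := Fintype.ofFinite (B → B)
  choose κ hκ hκ' using fun h : B → B => exists_idem_one h
  have hpos : 0 < ∏ h : B → B, κ h := Finset.prod_pos (fun h _ => hκ h)
  refine ⟨∏ h : B → B, κ h - 1, fun h x => ?_⟩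
  rw [Nat.sub_add_cancel hpos]
  obtain ⟨c, hc⟩ := Finset.dvd_prod_of_mem κ (Finset.mem_univ h)
  rw [hc] at hpos ⊢
  rw [idem_mul h _ (hκ' h) c (Nat.pos_of_mul_pos_left hpos)]
  exact hκ' h x

/-- the exponent -/
noncomputable def kk (B : Type) [Finite B] : ℕ := Classical.choose (exists_idem B)

theorem kk_spec {B : Type} [Finite B] (h : B → B) (x : B) :
    h^[kk B + 1] (h^[kk B + 1] x) = h^[kk B + 1] x := Classical.choose_spec (exists_idem B) h x

theorem mapsTo_iter {B : Type} {h : B → B} {U : Set B} (hU : ∀ x ∈ U, h x ∈ U) (k : ℕ) :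
    ∀ x ∈ U, h^[k] x ∈ U := by
  induction k with
  | zero => exact fun x hx => hx
  | succ k ih => intro x hx; rw [Function.iterate_succ_apply']; exact hU _ (ih x hx)

theorem injOn_iter {B : Type} {h : B → B} {U : Set B} (hU : ∀ x ∈ U, h x ∈ U)
    (hi : Set.InjOn h U) (k : ℕ) : Set.InjOn (h^[k]) U := by
  induction k with
  | zero => exact fun x _ y _ e => e
  | succ k ih =>
    intro x hx y hy e
    rw [Function.iterate_succ_apply', Function.iterate_succ_apply'] at e
    exact ih hx hy (hi (mapsTo_iter hU k x hx) (mapsTo_iter hU k y hy) e)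

theorem kk_id {B : Type} [Finite B] {h : B → B} {U : Set B} (hU : ∀ x ∈ U, h x ∈ U)
    (hi : Set.InjOn h U) {x : B} (hx : x ∈ U) : h^[kk B + 1] x = x :=
  injOn_iter hU hi _ (mapsTo_iter hU _ _ hx) hx (kk_spec h x)


/-! ## Cubes and uniformity -/

/-- the subalgebra of cubes generated by edges -/
inductive Cb (A : Algebra σ) (R : A.carrier → A.carrier → Prop) {I : Type} :
    ((I → Bool) → A.carrier) → Prop
  | edge (i : I) (a b : A.carrier) : R a b → Cb A R (fun ε => if ε i then b else a)
  | app (o : σ.ops) (g : Fin (σ.arity o) → (I → Bool) → A.carrier) :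
      (∀ j, Cb A R (g j)) → Cb A R (fun ε => A.interp o (fun j => g j ε))

theorem Cb.tw {A : Algebra σ} {R : A.carrier → A.carrier → Prop} {I X : Type} (i : I)
    {h h' : (X → A.carrier) → A.carrier} (hh : Tw A R h h')
    {Φ : X → (I → Bool) → A.carrier} (hΦ : ∀ x, Cb A R (Φ x)) :
    Cb A R (fun ε => if ε i then h' (fun x => Φ x ε) else h (fun x => Φ x ε)) := by
  induction hh with
  | proj x => simpa using hΦ x
  | const hc => exact Cb.edge i _ _ hc
  | app o g g' _ ih =>
    have := Cb.app o _ ih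
    convert this using 2 with ε
    split_ifs <;> rfl

/-- Every cube is the evaluation of a polynomial on a grouped choice vector. -/
theorem Cb.exists_pol (A : Algebra σ) [Finite A.carrier] (α : Con A) (n : ℕ) :
    ∃ (N : ℕ) (g : Fin N → Fin n) (a b : Fin N → A.carrier), (∀ i, α.r (a i) (b i)) ∧
      ∀ Φ : (Fin n → Bool) → A.carrier, Cb A α.r Φ →
        ∃ p : (Fin N → A.carrier) → A.carrier, IsPolynomial A p ∧
          ∀ ε, Φ ε = p (chooseVec g a b ε) := by
  obtain ⟨N, ⟨e⟩⟩ := Finite.exists_equiv_fin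
    (Fin n × {ab : A.carrier × A.carrier // α.r ab.1 ab.2})
  refine ⟨N, fun i => (e.symm i).1, fun i => (e.symm i).2.1.1, fun i => (e.symm i).2.1.2,
    fun i => (e.symm i).2.2, fun Φ hΦ => ?_⟩
  induction hΦ with
  | edge i a b hab =>
    refine ⟨fun x => x (e (i, ⟨(a, b), hab⟩)), IsPolynomial.proj _, fun ε => ?_⟩
    simp [chooseVec]
  | app o g _ ih =>
    choose p hp hp' using ih
    refine ⟨fun x => A.interp o (fun j => p j x), IsPolynomial.app o _ hp, fun ε => ?_⟩
    simp only [hp']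

/-- supernilpotence of a congruence, in the form used below -/
def SN {A : Algebra σ} (α : Con A) : Prop :=
  ∃ m, Centralizes (fun _ : Fin m => α) α Con.bot

theorem centralizes_comm {A : Algebra σ} {n : ℕ} (α : Fin n → Con A) (β : Con A) :
    Centralizes α β (commutator α β) := by
  intro N p hp g a b hab h δ hδ
  exact hδ N p hp g a b hab (fun ε hε => h ε hε δ hδ)

theorem SN.of_nfold {A : Algebra σ} {α : Con A} {n : ℕ} (hn : 2 ≤ n)
    (h : nfold α n = Con.bot) : SN α := by
  obtain ⟨m, rfl⟩ : ∃ m, n = m + 2 := ⟨n - 2, by omega⟩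
  refine ⟨m + 1, ?_⟩
  rw [← h]
  exact centralizes_comm _ _

theorem unif {A : Algebra σ} [Finite A.carrier] {α : Con A} (hα : SN α)
    {h h' : A.carrier → A.carrier} (hh : Tw1 A α.r h h') {U : Set A.carrier}
    (hU : ∀ x ∈ U, h x ∈ U) (hU' : ∀ x ∈ U, h' x ∈ U) (hi : Set.InjOn h U) :
    Set.InjOn h' U := by
  obtain ⟨m, hm⟩ := hα
  set k := kk A.carrier with hk
  have hT : Tw1 A α.r (h'^[k+1]) (h^[k+1]) := (Tw1.iter hh (k+1)).symm (fun _ _ => α.symm)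
  have key : ∀ s ∈ U, h'^[k+1] s = s := by
    intro s hs
    set H := h^[k+1] with hH
    set H' := h'^[k+1] with hH'
    have e1 : H s = s := kk_id hU hi hs
    have e2 : H (H' s) = H' s := kk_id hU hi (mapsTo_iter hU' _ _ hs)
    have e3 : H' (H' s) = H' s := kk_spec h' s
    have hrel : α.r (H' s) s := by
      have := hT.rel (α.refl s)
      rwa [e1] at this
    obtain ⟨N, g, a, b, hab, hp⟩ := Cb.exists_pol A α (m + 1)
    have fold : ∀ l : List (Fin (m+1)), Cb A α.r (I := Fin (m+1)) (fun ε =>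
        if ∀ i ∈ l, ε i = true then (if ε (Fin.last m) then s else H' s) else H' s) := by
      intro l
      induction l with
      | nil => simpa using Cb.edge (R := α.r) (Fin.last m) _ _ hrel
      | cons i l ih =>
        have := Cb.tw i hT (Φ := fun _ => _) (fun _ => ih)
        convert this using 2 with ε
        by_cases h1 : ε i = true <;> rcases Classical.propComplete (∀ i ∈ l, ε i = true) with h2 | h2 <;>
          by_cases h3 : ε (Fin.last m) = true <;>
          simp only [List.forall_mem_cons, h1, h2, h3, e1, e2, e3, if_true, if_false, true_and,
            false_and, Bool.false_eq_true]
    obtain ⟨p, hpol, hp⟩ := hp _ (fold ((List.finRange m).map Fin.castSucc))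
    have := hm N p hpol g a b (fun i => by
      have : (Fin.lastCases (motive := fun _ => Con A) α (fun _ => α) (g i)) = α := by
        refine Fin.lastCases ?_ ?_ (g i)
        · simp
        · intro j; simp
      rw [this]; exact hab i) (fun ε hε => ?_)
    · rw [← hp, ← hp] at this
      simpa [Con.bot] using this
    · rw [← hp, ← hp]
      have : ¬ ∀ i, ε i = true := fun hall => hε (funext hall)
      simp [Con.bot, this]
  intro x hx y hy e
  rw [← key x hx, ← key y hy, Function.iterate_succ_apply, Function.iterate_succ_apply, e]


/-! ## Hybrid argument, covers, minimal sets -/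

theorem hybrid {X B C : Type} [Finite X] {r : B → B → Prop} (E : C → C → Prop)
    (hrefl : ∀ c, E c c) (htrans : ∀ a b c, E a b → E b c → E a c) (F : (X → B) → C)
    (step : ∀ [DecidableEq X] (v : X → B) (x : X) (c : B), r (v x) c →
      E (F v) (F (Function.update v x c)))
    {v w : X → B} (hvw : ∀ x, r (v x) (w x)) : E (F v) (F w) := by
  classical
  have := Fintype.ofFinite X
  have key : ∀ s : Finset X, E (F v) (F (s.piecewise w v)) := by
    intro s
    induction s using Finset.induction_on with
    | empty => simpa using hrefl _
    | insert j s hj ih =>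
      rw [Finset.piecewise_insert]
      refine htrans _ _ _ ih (step _ _ _ ?_)
      rw [Finset.piecewise_eq_of_notMem _ _ _ hj]
      exact hvw j
  simpa using key Finset.univ

section

variable {A : Algebra σ}

theorem Tw.slice {R : A.carrier → A.carrier → Prop} (hR : ∀ a, R a a) {X : Type} [DecidableEq X]
    {F F' : (X → A.carrier) → A.carrier} (h : Tw A R F F') (v : X → A.carrier) (x : X) :
    Tw1 A R (fun c => F (Function.update v x c)) (fun c => F' (Function.update v x c)) := by
  refine Tw.subst h (G := fun y w => Function.update v x (w ()) y)
    (G' := fun y w => Function.update v x (w ()) y) (fun y => ?_)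
  by_cases hy : y = x
  · subst hy
    simpa using Tw.proj (A := A) (R := R) ()
  · simpa [Function.update_of_ne hy] using Tw.const (hR (v y))

theorem Con.ext_r {c d : Con A} (h : ∀ a b, c.r a b ↔ d.r a b) : c = d := by
  have : c.r = d.r := by
    funext a b
    exact propext (h a b)
  cases c; cases d; cases this; rfl

instance [Finite A.carrier] : Finite (Con A) :=
  Finite.of_injective (fun c : Con A => c.r) (fun c d h => Con.ext_r (fun a b => by
    have h : c.r = d.r := h
    rw [h]))

/-- number of related pairs -/
noncomputable def Con.sz (c : Con A) : ℕ := Set.ncard {p : A.carrier × A.carrier | c.r p.1 p.2}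

theorem Con.sz_lt [Finite A.carrier] {c d : Con A} (h : ∀ a b, c.r a b → d.r a b)
    (hn : ∃ a b, d.r a b ∧ ¬ c.r a b) : c.sz < d.sz := by
  refine Set.ncard_lt_ncard ⟨fun p hp => h _ _ hp, fun hs => ?_⟩ (Set.toFinite _)
  obtain ⟨a, b, h1, h2⟩ := hn
  exact h2 (hs (show (a, b) ∈ {p : A.carrier × A.carrier | d.r p.1 p.2} from h1))

/-- `β` covers `γ` -/
structure Cov (γ β : Con A) : Prop where
  le : ∀ {a b}, γ.r a b → β.r a b
  ne : ∃ a b, β.r a b ∧ ¬ γ.r a b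
  cov : ∀ δ : Con A, (∀ a b, γ.r a b → δ.r a b) → (∀ a b, δ.r a b → β.r a b) →
    (∃ a b, δ.r a b ∧ ¬ γ.r a b) → ∀ a b, β.r a b → δ.r a b

theorem exists_cov_pair [Finite A.carrier] {x y : A.carrier} (hxy : x ≠ y) :
    ∃ γ β : Con A, Cov γ β ∧ β.r x y ∧ ¬ γ.r x y := by
  obtain ⟨γ, hγ, hmax⟩ := Set.exists_max_image {c : Con A | ¬ c.r x y} Con.sz (Set.toFinite _)
    ⟨Con.bot, hxy⟩
  refine ⟨γ, Con.sInf {c | (∀ a b, γ.r a b → c.r a b) ∧ c.r x y}, ⟨?_, ?_, ?_⟩, ?_, hγ⟩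
  · intro a b h c hc
    exact hc.1 a b h
  · exact ⟨x, y, fun c hc => hc.2, hγ⟩
  · intro δ h1 _ h3 a b hab
    refine hab δ ⟨h1, ?_⟩
    by_contra hn
    exact absurd (hmax δ hn) (not_le.mpr (Con.sz_lt h1 h3))
  · exact fun c hc => hc.2

theorem exists_cov_below [Finite A.carrier] {β : Con A} {x y : A.carrier} (hxy : x ≠ y)
    (hβ : β.r x y) : ∃ γ : Con A, Cov γ β := by
  obtain ⟨γ, hγ, hmax⟩ := Set.exists_max_image
    {c : Con A | (∀ a b, c.r a b → β.r a b) ∧ ∃ a b, β.r a b ∧ ¬ c.r a b} Con.sz (Set.toFinite _)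
    ⟨Con.bot, fun a b h => by cases (h : a = b); exact β.refl a, x, y, hβ, hxy⟩
  refine ⟨γ, ⟨fun h => hγ.1 _ _ h, hγ.2, ?_⟩⟩
  intro δ h1 h2 h3
  by_contra hn
  push Not at hn
  exact absurd (hmax δ ⟨h2, hn⟩) (not_le.mpr (Con.sz_lt h1 h3))

/-- the congruence generated by `γ` and the polynomial images of one pair -/
theorem Cov.ind {γ β : Con A} (hc : Cov γ β) {p q : A.carrier} (hpq : β.r p q)
    (hn : ¬ γ.r p q) (E : A.carrier → A.carrier → Prop) (hsymm : ∀ a b, E a b → E b a)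
    (htrans : ∀ a b c, E a b → E b c → E a c) (hγ : ∀ a b, γ.r a b → E a b)
    (hg : ∀ g, Tw1 A Eq g g → E (g p) (g q)) {a b : A.carrier} (hab : β.r a b) : E a b := by
  let L : A.carrier → A.carrier → Prop := fun a b =>
    γ.r a b ∨ ∃ g, Tw1 A Eq g g ∧ a = g p ∧ b = g q
  have hL : ∀ f, Tw1 A Eq f f → ∀ a b, Relation.EqvGen L a b →
      Relation.EqvGen L (f a) (f b) := by
    intro f hf a b h
    induction h with
    | rel a b h =>
      refine Relation.EqvGen.rel _ _ ?_
      rcases h with h | ⟨g, hg, rfl, rfl⟩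
      · exact Or.inl (hf.pres γ h)
      · exact Or.inr ⟨fun x => f (g x), hf.comp hg, rfl, rfl⟩
    | refl a => exact Relation.EqvGen.refl _
    | symm a b _ ih => exact Relation.EqvGen.symm _ _ ih
    | trans a b c _ _ ih1 ih2 => exact Relation.EqvGen.trans _ _ _ ih1 ih2
  let δ : Con A :=
    { r := Relation.EqvGen L
      refl := Relation.EqvGen.refl
      symm := fun h => Relation.EqvGen.symm _ _ h
      trans := fun h h' => Relation.EqvGen.trans _ _ _ h h'
      compat := fun o x y h => by
        refine hybrid (r := Relation.EqvGen L) (Relation.EqvGen L) Relation.EqvGen.refl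
          Relation.EqvGen.trans (A.interp o) ?_ h
        intro _ v i c hvc
        have hT : Tw A Eq (fun v : Fin (σ.arity o) → A.carrier => A.interp o v)
          (fun v => A.interp o v) := Tw.app o (fun j v => v j) (fun j v => v j) (fun j => Tw.proj j)
        have := hL _ (hT.slice (fun _ => rfl) v i) _ _ hvc
        rwa [Function.update_eq_self] at this }
  have hδ : δ.r a b := by
    refine hc.cov δ (fun a b h => Relation.EqvGen.rel _ _ (Or.inl h)) ?_ ⟨p, q, ?_, hn⟩ a b hab
    · intro a b h
      induction (h : Relation.EqvGen L a b) with
      | rel a b h =>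
        rcases h with h | ⟨g, hg, rfl, rfl⟩
        · exact hc.le h
        · exact hg.pres β hpq
      | refl a => exact β.refl a
      | symm a b h ih => exact β.symm ih
      | trans a b c h1 h2 ih1 ih2 => exact β.trans ih1 ih2
    · exact Relation.EqvGen.rel _ _ (Or.inr ⟨fun x => x, Tw1.id, rfl, rfl⟩)
  have hfin : ∀ a b, Relation.EqvGen L a b → E a b := by
    intro a b h
    induction h with
    | rel a b h =>
      rcases h with h | ⟨g, hg', rfl, rfl⟩
      · exact hγ _ _ h
      · exact hg g hg'
    | refl a => exact hγ _ _ (γ.refl a)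
    | symm a b h ih => exact hsymm _ _ ih
    | trans a b c h1 h2 ih1 ih2 => exact htrans _ _ _ ih1 ih2
  exact hfin _ _ hδ

/-- a separated pair gives a separated polynomial image of any generating pair -/
theorem Cov.exists_sep {γ β : Con A} (hc : Cov γ β) {p q : A.carrier} (hpq : β.r p q)
    (hn : ¬ γ.r p q) {f : A.carrier → A.carrier} (hf : Tw1 A Eq f f)
    (hs : ∃ a b, β.r a b ∧ ¬ γ.r (f a) (f b)) :
    ∃ g, Tw1 A Eq g g ∧ ¬ γ.r (f (g p)) (f (g q)) := by
  by_contra hcon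
  push Not at hcon
  obtain ⟨a, b, hab, hs⟩ := hs
  exact hs (hc.ind hpq hn (fun a b => γ.r (f a) (f b)) (fun _ _ => γ.symm)
    (fun _ _ _ => γ.trans) (fun a b h => hf.pres γ h) hcon hab)

/-- idempotent polynomial with minimal separating range -/
structure MinSet (γ β : Con A) (e : A.carrier → A.carrier) : Prop where
  pol : Tw1 A Eq e e
  idem : ∀ x, e (e x) = e x
  sep : ∃ a b, β.r a b ∧ ¬ γ.r (e a) (e b)
  min : ∀ f, Tw1 A Eq f f → (∃ a b, β.r a b ∧ ¬ γ.r (f a) (f b)) →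
    (Set.range e).ncard ≤ (Set.range f).ncard

theorem Cov.exists_min [Finite A.carrier] {γ β : Con A} (hc : Cov γ β) : ∃ e, MinSet γ β e := by
  obtain ⟨f, ⟨hf, a, b, hab, hfab⟩, hmin⟩ := Set.exists_min_image
    {f : A.carrier → A.carrier | Tw1 A Eq f f ∧ ∃ a b, β.r a b ∧ ¬ γ.r (f a) (f b)}
    (fun f => (Set.range f).ncard) (Set.toFinite _) ⟨fun x => x, Tw1.id, hc.ne⟩
  obtain ⟨g, hg, hsep⟩ := hc.exists_sep (hf.pres β hab) hfab hf ⟨a, b, hab, hfab⟩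
  let h : A.carrier → A.carrier := fun x => f (g x)
  have hh : Tw1 A Eq h h := hf.comp hg
  have hmaps : ∀ x ∈ Set.range f, h x ∈ Set.range f := fun x _ => ⟨g x, rfl⟩
  have himg : h '' Set.range f = Set.range (fun x => h (f x)) := by
    rw [← Set.range_comp]; rfl
  have hle := hmin (fun x => h (f x)) ⟨hh.comp hf, a, b, hab, hsep⟩
  have hinj : Set.InjOn h (Set.range f) := by
    refine Set.injOn_of_ncard_image_eq (le_antisymm (Set.ncard_image_le (Set.toFinite _)) ?_)
      (Set.toFinite _)
    rw [himg]
    exact hle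
  have hid : ∀ x, h^[kk A.carrier + 1] (f x) = f x := fun x => kk_id hmaps hinj ⟨x, rfl⟩
  refine ⟨h^[kk A.carrier + 1], hh.iter _, kk_spec h, ⟨f a, f b, hf.pres β hab, ?_⟩, ?_⟩
  · rw [hid, hid]; exact hfab
  · intro f' hf' hs'
    refine le_trans (Set.ncard_le_ncard ?_ (Set.toFinite _)) (hmin f' ⟨hf', hs'⟩)
    rintro _ ⟨x, rfl⟩
    rw [Function.iterate_succ_apply']
    exact ⟨_, rfl⟩

/-- The minimal set. -/
def UU {A : Algebra σ} (e : A.carrier → A.carrier) : Set A.carrier := {x | e x = x}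

namespace MinSet

variable {γ β : Con A} {e : A.carrier → A.carrier}

theorem mem (he : MinSet γ β e) (x : A.carrier) : e x ∈ UU e := he.idem x

theorem p1 [Finite A.carrier] (he : MinSet γ β e) {f : A.carrier → A.carrier} (hf : Tw1 A Eq f f) :
    Set.InjOn f (UU e) ∨ ∀ a ∈ UU e, ∀ b ∈ UU e, β.r a b → γ.r (f a) (f b) := by
  by_contra hcon
  push Not at hcon
  obtain ⟨hni, a, ha, b, hb, hab, hn⟩ := hcon
  apply hni
  have hU : UU e = Set.range e := by
    ext x
    exact ⟨fun h => ⟨x, h⟩, by rintro ⟨y, rfl⟩; exact he.idem y⟩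
  have hle := he.min (fun x => f (e x)) (hf.comp he.pol) ⟨a, b, hab, by
    have h1 : e a = a := ha
    have h2 : e b = b := hb
    simpa [h1, h2] using hn⟩
  rw [hU]
  refine Set.injOn_of_ncard_image_eq (le_antisymm (Set.ncard_image_le (Set.toFinite _)) ?_)
    (Set.toFinite _)
  rw [← Set.range_comp]
  exact hle

theorem p2 [Finite A.carrier] {f : A.carrier → A.carrier} (hf : Tw1 A Eq f f)
    (hfU : ∀ x ∈ UU e, f x ∈ UU e) (hi : Set.InjOn f (UU e)) {a b : A.carrier}
    (ha : a ∈ UU e) (hb : b ∈ UU e) (h : γ.r (f a) (f b)) : γ.r a b := by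
  have := (hf.iter (kk A.carrier)).pres γ h
  rw [← Function.iterate_succ_apply, ← Function.iterate_succ_apply] at this
  rwa [kk_id hfU hi ha, kk_id hfU hi hb] at this

theorem p3 (he : MinSet γ β e) (hc : Cov γ β) {p q : A.carrier} (hpq : β.r p q)
    (hn : ¬ γ.r p q) : ∃ κ, Tw1 A Eq κ κ ∧ (∀ x, κ x ∈ UU e) ∧ ¬ γ.r (κ p) (κ q) := by
  obtain ⟨g, hg, hs⟩ := hc.exists_sep hpq hn he.pol he.sep
  exact ⟨fun x => e (g x), he.pol.comp hg, fun x => he.mem _, hs⟩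

/-- a separated pair inside the minimal set -/
theorem exists_pair (he : MinSet γ β e) :
    ∃ u ∈ UU e, ∃ v ∈ UU e, β.r u v ∧ ¬ γ.r u v := by
  obtain ⟨a, b, hab, hn⟩ := he.sep
  exact ⟨e a, he.mem a, e b, he.mem b, he.pol.pres β hab, hn⟩

end MinSet

/-- twins are parameterised by a common term -/
theorem Tw.exists_param2 {R : A.carrier → A.carrier → Prop} {X : Type}
    {f f' : (X → A.carrier) → A.carrier} (h : Tw A R f f') :
    ∃ P : (X → A.carrier) → ({p : A.carrier × A.carrier // R p.1 p.2} → A.carrier) → A.carrier,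
      Tw A (fun _ _ => False) (X := X ⊕ {p : A.carrier × A.carrier // R p.1 p.2})
        (fun v => P (fun x => v (Sum.inl x)) (fun a => v (Sum.inr a)))
        (fun v => P (fun x => v (Sum.inl x)) (fun a => v (Sum.inr a))) ∧
      (∀ v, f v = P v (fun a => a.1.1)) ∧ ∀ v, f' v = P v (fun a => a.1.2) := by
  induction h with
  | proj x => exact ⟨fun v _ => v x, Tw.proj (Sum.inl x), fun v => rfl, fun v => rfl⟩
  | @const c d h =>
    exact ⟨fun _ w => w ⟨(c, d), h⟩, Tw.proj (Sum.inr _), fun v => rfl, fun v => rfl⟩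
  | app o g g' _ ih =>
    choose P hP hP' hPPd using ih
    refine ⟨fun v w => A.interp o (fun j => P j v w), Tw.app o _ _ hP, fun v => ?_, fun v => ?_⟩
    · simp only [hP']
    · simp only [hPPd]

/-- Induction along a chain of elementary twins. -/
theorem twin_ind [Finite A.carrier] {α : Con A}
    (E : (A.carrier → A.carrier) → (A.carrier → A.carrier) → Prop)
    (hrefl : ∀ f, E f f) (htrans : ∀ f g h, E f g → E g h → E f h)
    (step : ∀ p, Tw2 A Eq p p → ∀ y y', α.r y y' → E (fun x => p x y) (fun x => p x y'))
    {f f' : A.carrier → A.carrier} (h : Tw1 A α.r f f') : E f f' := by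
  obtain ⟨P, hP, h1, h2⟩ := h.exists_param2
  have h1' : f = fun x => P (fun _ => x) (fun a => a.1.1) := funext fun x => h1 (fun _ => x)
  have h2' : f' = fun x => P (fun _ => x) (fun a => a.1.2) := funext fun x => h2 (fun _ => x)
  rw [h1', h2']
  refine hybrid (r := α.r) E hrefl htrans (fun w x => P (fun _ => x) w) ?_ (fun a => a.2)
  intro _ v i c hvc
  have hp : Tw2 A Eq (fun x y => P (fun _ => x) (Function.update v i y))
      (fun x y => P (fun _ => x) (Function.update v i y)) := by
    refine Tw.subst (Tw.ofTerm hP)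
      (G := fun s w => Sum.elim (fun _ => w 0) (Function.update v i (w 1)) s)
      (G' := fun s w => Sum.elim (fun _ => w 0) (Function.update v i (w 1)) s) ?_
    rintro (_ | j)
    · exact Tw.proj 0
    · by_cases hj : j = i
      · subst hj
        simpa using Tw.proj (A := A) (R := Eq) (X := Fin 2) 1
      · simpa [Function.update_of_ne hj] using Tw.const rfl
  have := step _ hp _ _ hvc
  rwa [Function.update_eq_self] at this

end


/-! ## The pseudo-Mal'cev operation on a minimal set -/

section

variable {A : Algebra σ}

theorem Tw2.row {ρ : Con A} {p : A.carrier → A.carrier → A.carrier} (hp : Tw2 A Eq p p)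
    {x x' : A.carrier} (h : ρ.r x x') : Tw1 A ρ.r (fun y => p x y) (fun y => p x' y) :=
  Tw2.ap (X := Unit) (Tw.ofPol hp ρ) (Tw.const h) (Tw.proj ())

theorem Tw2.col {ρ : Con A} {p : A.carrier → A.carrier → A.carrier} (hp : Tw2 A Eq p p)
    {y y' : A.carrier} (h : ρ.r y y') : Tw1 A ρ.r (fun x => p x y) (fun x => p x y') :=
  Tw2.ap (X := Unit) (Tw.ofPol hp ρ) (Tw.proj ()) (Tw.const h)

theorem Tw2.rowP {p : A.carrier → A.carrier → A.carrier} (hp : Tw2 A Eq p p)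
    (x : A.carrier) : Tw1 A Eq (fun y => p x y) (fun y => p x y) :=
  Tw2.ap (X := Unit) hp (Tw.const rfl) (Tw.proj ())

theorem Tw2.colP {p : A.carrier → A.carrier → A.carrier} (hp : Tw2 A Eq p p)
    (y : A.carrier) : Tw1 A Eq (fun x => p x y) (fun x => p x y) :=
  Tw2.ap (X := Unit) hp (Tw.proj ()) (Tw.const rfl)

theorem Tw2.iterR {R : A.carrier → A.carrier → Prop} {p : A.carrier → A.carrier → A.carrier}
    (hp : Tw2 A R p p) (k : ℕ) :
    Tw2 A R (fun x y => (p x)^[k] y) (fun x y => (p x)^[k] y) :=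
  Tw.iter (X := Fin 2) (F := fun v => p (v 0)) (F' := fun v => p (v 0))
    (fun _ _ ha => hp.ap (Tw.proj 0) ha) k (Tw.proj 1)

theorem Tw2.iterL {R : A.carrier → A.carrier → Prop} {p : A.carrier → A.carrier → A.carrier}
    (hp : Tw2 A R p p) (k : ℕ) :
    Tw2 A R (fun x y => (fun z => p z y)^[k] x) (fun x y => (fun z => p z y)^[k] x) :=
  Tw.iter (X := Fin 2) (F := fun v z => p z (v 1)) (F' := fun v z => p z (v 1))
    (fun _ _ ha => hp.ap ha (Tw.proj 1)) k (Tw.proj 0)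

/-- a binary polynomial on the minimal set which is injective in both variables at `u` -/
def HasP (e : A.carrier → A.carrier) (u : A.carrier) : Prop :=
  ∃ p, Tw2 A Eq p p ∧ (∀ x y, p x y ∈ UU e) ∧ Set.InjOn (fun x => p x u) (UU e) ∧
    Set.InjOn (fun y => p u y) (UU e)

variable [Finite A.carrier]

theorem HasP.move {α : Con A} (hα : SN α) {e : A.carrier → A.carrier} {u v : A.carrier}
    (h : HasP e u) (huv : α.r u v) : HasP e v := by
  obtain ⟨p, hp, hU, h1, h2⟩ := h
  exact ⟨p, hp, hU, unif hα (hp.col huv) (fun x _ => hU _ _) (fun x _ => hU _ _) h1,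
    unif hα (hp.row huv) (fun x _ => hU _ _) (fun x _ => hU _ _) h2⟩

theorem HasP.exists_M {α : Con A} (hα : SN α) {e : A.carrier → A.carrier} {u : A.carrier}
    (hu : u ∈ UU e) (h : HasP e u) :
    ∃ M, Tw3 A Eq M M ∧ (∀ x y z, M x y z ∈ UU e) ∧
      (∀ x ∈ UU e, ∀ y ∈ UU e, α.r u y → M x y y = x) ∧
      (∀ y ∈ UU e, α.r u y → ∀ z ∈ UU e, M y y z = z) ∧
      (∀ y ∈ UU e, α.r u y → ∀ z ∈ UU e, α.r u z → Set.InjOn (fun x => M x y z) (UU e)) := by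
  obtain ⟨p₀, hp₀, hU₀, i1, i2⟩ := h
  set k := kk A.carrier with hk
  have hcol : ∀ x ∈ UU e, (fun x => p₀ x u) x ∈ UU e := fun x _ => hU₀ _ _
  obtain ⟨p, hp, hU, hpu, hinj⟩ : ∃ p, Tw2 A Eq p p ∧ (∀ x y, p x y ∈ UU e) ∧
      (∀ x ∈ UU e, p x u = x) ∧ Set.InjOn (fun y => p u y) (UU e) := by
    refine ⟨fun x y => (fun x => p₀ x u)^[k] (p₀ x y), ?_, ?_, ?_, ?_⟩
    · exact ((hp₀.colP u).iter k).ap hp₀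
    · intro x y
      exact mapsTo_iter hcol k _ (hU₀ _ _)
    · intro x hx
      have := kk_id hcol i1 hx
      rwa [Function.iterate_succ_apply] at this
    · intro y hy y' hy' he
      exact i2 hy hy' (injOn_iter hcol i1 k (hU₀ _ _) (hU₀ _ _) he)
  have inj1 : ∀ y, α.r u y → Set.InjOn (fun x => p x y) (UU e) := fun y hy =>
    unif hα (hp.col hy) (fun x _ => hU _ _) (fun x _ => hU _ _)
      (fun x hx x' hx' he => by simpa [hpu x hx, hpu x' hx'] using he)
  have inj2 : ∀ x, α.r u x → Set.InjOn (fun y => p x y) (UU e) := fun x hx =>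
    unif hα (hp.row hx) (fun x _ => hU _ _) (fun x _ => hU _ _) hinj
  set L : A.carrier → A.carrier → A.carrier := fun x z => (p x)^[k] z with hL
  set Rr : A.carrier → A.carrier → A.carrier := fun z y => (fun x => p x y)^[k] z with hR
  have LT : Tw2 A Eq L L := hp.iterR k
  have RT : Tw2 A Eq Rr Rr := hp.iterL k
  have LU : ∀ x, ∀ z ∈ UU e, L x z ∈ UU e := fun x z hz =>
    mapsTo_iter (fun z _ => hU x z) k z hz
  have RU : ∀ z ∈ UU e, ∀ y, Rr z y ∈ UU e := fun z hz y =>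
    mapsTo_iter (h := fun x => p x y) (fun z _ => hU z y) k z hz
  have Lu : L u u = u := by
    have h0 : p u u = u := hpu u hu
    exact Function.iterate_fixed h0 k
  have Lα : ∀ y z, α.r u y → α.r u z → α.r u (L y z) := by
    intro y z hy hz
    have := (LT.row hy).rel hz
    rwa [Lu] at this
  have Lcancel : ∀ y ∈ UU e, α.r u y → ∀ z ∈ UU e, p y (L y z) = z := by
    intro y _ hαy z hz
    have := kk_id (h := p y) (fun z _ => hU y z) (inj2 y hαy) hz
    rwa [Function.iterate_succ_apply'] at this
  have Rcancel : ∀ w, α.r u w → ∀ x ∈ UU e, p (Rr x w) w = x := by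
    intro w hw x hx
    have := kk_id (h := fun x => p x w) (fun z _ => hU z w) (inj1 w hw) hx
    rwa [Function.iterate_succ_apply'] at this
  have Rcancel' : ∀ w, α.r u w → ∀ x ∈ UU e, Rr (p x w) w = x := by
    intro w hw x hx
    have := kk_id (h := fun x => p x w) (fun z _ => hU z w) (inj1 w hw) hx
    rwa [Function.iterate_succ_apply] at this
  refine ⟨fun x y z => p (Rr x (L y y)) (L y z), ?_, fun _ _ _ => hU _ _, ?_, ?_, ?_⟩
  · exact hp.ap (RT.ap (Tw.proj 0) (LT.ap (Tw.proj 1) (Tw.proj 1))) (LT.ap (Tw.proj 1) (Tw.proj 2))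
  · intro x hx y hy hαy
    exact Rcancel _ (Lα y y hαy hαy) x hx
  · intro y hy hαy z hz
    have h1 : Rr y (L y y) = y := by
      have := Rcancel' _ (Lα y y hαy hαy) y hy
      rwa [Lcancel y hy hαy y hy] at this
    show p (Rr y (L y y)) (L y z) = z
    rw [h1, Lcancel y hy hαy z hz]
  · intro y hy hαy z hz hαz x hx x' hx' he
    have h1 := inj1 _ (Lα y z hαy hαz) (RU x hx _) (RU x' hx' _) he
    rw [← Rcancel _ (Lα y y hαy hαy) x hx, ← Rcancel _ (Lα y y hαy hαy) x' hx', h1]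

/-! ## Key lemma -/

variable {α γ β ρ : Con A} {e : A.carrier → A.carrier}

theorem reduceU (hα : SN α) (hρ : ∀ a b, ρ.r a b → α.r a b) (hc : Cov γ β)
    (he : MinSet γ β e) {u v : A.carrier} (hu : u ∈ UU e) (hv : v ∈ UU e) (huv : β.r u v)
    {f f' : A.carrier → A.carrier} (hf : Tw1 A ρ.r f f') (h1 : γ.r (f u) (f' u))
    (h2 : ¬ γ.r (f v) (f' v)) :
    ∃ F F', Tw1 A ρ.r F F' ∧ (∀ x, F x ∈ UU e) ∧ (∀ x, F' x ∈ UU e) ∧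
      Set.InjOn F (UU e) ∧ γ.r (F u) (F' u) ∧ ¬ γ.r (F v) (F' v) := by
  have hβ : β.r (f v) (f' v) :=
    β.trans (hf.left.pres β (β.symm huv)) (β.trans (hc.le h1) (hf.right.pres β huv))
  obtain ⟨κ, hκ, hκU, hκs⟩ := he.p3 hc hβ h2
  have hT : Tw1 A ρ.r (fun x => κ (f x)) (fun x => κ (f' x)) :=
    Tw1.comp (Tw.ofPol hκ ρ) hf
  refine ⟨fun x => κ (f x), fun x => κ (f' x), hT, fun x => hκU _, fun x => hκU _, ?_,
    hκ.pres γ h1, hκs⟩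
  by_contra hni
  have hni' : ¬ Set.InjOn (fun x => κ (f' x)) (UU e) := fun hi => hni
    (unif hα ((hT.mono hρ).symm (fun _ _ => α.symm)) (fun x _ => hκU _) (fun x _ => hκU _) hi)
  have c1 := (he.p1 hT.left).resolve_left hni v hv u hu (β.symm huv)
  have c2 := (he.p1 hT.right).resolve_left hni' u hu v hv huv
  exact hκs (γ.trans c1 (γ.trans (hκ.pres γ h1) c2))

theorem keyK0 (hα : SN α) (hle : ∀ a b, β.r a b → α.r a b) (hc : Cov γ β)
    (he : MinSet γ β e) {u v : A.carrier} (hu : u ∈ UU e) (hv : v ∈ UU e) (huv : β.r u v)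
    (hn : ¬ γ.r u v) (hP : HasP e u)
    {f f' : A.carrier → A.carrier} (hf : Tw1 A α.r f f') (h1 : γ.r (f u) (f' u)) :
    γ.r (f v) (f' v) := by
  by_contra h2
  obtain ⟨F, F', hF, hFU, hFU', hFi, h1, h2⟩ :=
    reduceU (ρ := α) hα (fun _ _ h => h) hc he hu hv huv hf h1 h2
  obtain ⟨M, hM, MU, Mr, Ml, Mi⟩ := hP.exists_M hα hu
  set k := kk A.carrier with hk
  have hkU : ∀ x ∈ UU e, F^[k] x ∈ UU e := mapsTo_iter (fun x _ => hFU x) k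
  have hki : Set.InjOn (F^[k]) (UU e) := injOn_iter (fun x _ => hFU x) hFi k
  have hkp : Tw1 A Eq (F^[k]) (F^[k]) := Tw1.iter hF.left k
  have hid : ∀ x ∈ UU e, F^[k] (F x) = x := fun x hx => by
    have := kk_id (fun x _ => hFU x) hFi hx
    rwa [Function.iterate_succ_apply] at this
  have hαuv := hle _ _ huv
  have hφ : Tw1 A α.r (fun y => M (F^[k] (F y)) y u) (fun y => M (F^[k] (F' y)) y u) :=
    Tw3.ap (Tw.ofPol hM α) (Tw1.comp (Tw.ofPol hkp α) hF) (Tw.proj ()) (Tw.const (α.refl u))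
  have e1 : M (F^[k] (F u)) u u = u := by rw [hid u hu]; exact Ml u hu (α.refl u) u hu
  have e2 : M (F^[k] (F v)) v u = u := by rw [hid v hv]; exact Ml v hv hαuv u hu
  have hne : u ≠ v := fun h => hn (h ▸ γ.refl u)
  have hni : ¬ Set.InjOn (fun y => M (F^[k] (F y)) y u) (UU e) := fun hi =>
    hne (hi hu hv (e1.trans e2.symm))
  have hni' : ¬ Set.InjOn (fun y => M (F^[k] (F' y)) y u) (UU e) := fun hi => hni
    (unif hα (hφ.symm (fun _ _ => α.symm)) (fun x _ => MU _ _ _) (fun x _ => MU _ _ _) hi)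
  have c := (he.p1 hφ.right).resolve_left hni' v hv u hu (β.symm huv)
  have hπu : γ.r (F^[k] (F' u)) u := by
    have := hkp.pres γ (γ.symm h1)
    rwa [hid u hu] at this
  have hMx : ∀ y z, Tw1 A Eq (fun x => M x y z) (fun x => M x y z) := fun y z =>
    Tw3.ap (X := Unit) hM (Tw.proj ()) (Tw.const rfl) (Tw.const rfl)
  have c2 : γ.r (M (F^[k] (F' u)) u u) u := by
    have := (hMx u u).pres γ hπu
    rwa [Ml u hu (α.refl u) u hu] at this
  have c3 : γ.r (M (F^[k] (F' v)) v u) (M v v u) := by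
    rw [Ml v hv hαuv u hu]
    exact γ.trans c c2
  have c4 : γ.r (F^[k] (F' v)) v :=
    MinSet.p2 (hMx v u) (fun x _ => MU _ _ _) (Mi v hv hαuv u hu (α.refl u))
      (hkU _ (hFU' v)) hv c3
  refine h2 (MinSet.p2 hkp hkU hki (hFU v) (hFU' v) ?_)
  rw [hid v hv]
  exact γ.symm c4

/-- spreading from one pair to all pairs of the cover -/
theorem spread (hc : Cov γ β) {u v : A.carrier} (huv : β.r u v) (hn : ¬ γ.r u v)
    (h1 : ∀ f f', Tw1 A ρ.r f f' → γ.r (f u) (f' u) → γ.r (f v) (f' v))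
    (h2 : ∀ f f', Tw1 A ρ.r f f' → γ.r (f v) (f' v) → γ.r (f u) (f' u))
    {f f' : A.carrier → A.carrier} (hf : Tw1 A ρ.r f f') {a b : A.carrier} (hab : β.r a b)
    (h : γ.r (f a) (f' a)) : γ.r (f b) (f' b) := by
  refine (hc.ind huv hn (fun a b => γ.r (f a) (f' a) ↔ γ.r (f b) (f' b)) (fun _ _ h => h.symm)
    (fun _ _ _ h h' => h.trans h') ?_ ?_ hab).1 h
  · intro a b h
    have e1 := hf.left.pres γ h
    have e2 := hf.right.pres γ h
    exact ⟨fun h => γ.trans (γ.symm e1) (γ.trans h e2),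
      fun h => γ.trans e1 (γ.trans h (γ.symm e2))⟩
  · intro g hg
    have hT := Tw1.comp hf (Tw.ofPol hg ρ)
    exact ⟨h1 _ _ hT, h2 _ _ hT⟩

theorem keyK (hα : SN α) (hle : ∀ a b, β.r a b → α.r a b) (hc : Cov γ β)
    (he : MinSet γ β e) {u v : A.carrier} (hu : u ∈ UU e) (hv : v ∈ UU e) (huv : β.r u v)
    (hn : ¬ γ.r u v) (hP : HasP e u)
    {f f' : A.carrier → A.carrier} (hf : Tw1 A α.r f f') {a b : A.carrier} (hab : β.r a b)
    (h : γ.r (f a) (f' a)) : γ.r (f b) (f' b) :=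
  spread hc huv hn (fun _ _ hf => keyK0 hα hle hc he hu hv huv hn hP hf)
    (fun _ _ hf => keyK0 hα hle hc he hv hu (β.symm huv) (fun h => hn (γ.symm h))
      (hP.move hα (hle _ _ huv)) hf) hf hab h

theorem noP (hα : SN α) (hle : ∀ a b, β.r a b → α.r a b) (hc : Cov γ β)
    (he : MinSet γ β e) {u v : A.carrier} (hu : u ∈ UU e) (hv : v ∈ UU e) (huv : β.r u v)
    (hn : ¬ γ.r u v) (hP : ¬ HasP e v)
    {f f' : A.carrier → A.carrier} (hf : Tw1 A β.r f f') (hfi : Set.InjOn (fun x => e (f x)) (UU e)) :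
    γ.r (e (f v)) (e (f' v)) := by
  have hun : ∀ {f f' : A.carrier → A.carrier}, Tw1 A β.r f f' →
      Set.InjOn (fun x => e (f x)) (UU e) → Set.InjOn (fun x => e (f' x)) (UU e) := by
    intro f f' hf hi
    exact unif hα ((Tw1.comp (Tw.ofPol he.pol β) hf).mono hle) (fun x _ => he.mem _)
      (fun x _ => he.mem _) hi
  have main := twin_ind (α := β) (fun f f' => (Set.InjOn (fun x => e (f x)) (UU e) →
      Set.InjOn (fun x => e (f' x)) (UU e)) ∧ (Set.InjOn (fun x => e (f x)) (UU e) →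
      γ.r (e (f v)) (e (f' v)))) (fun f => ⟨fun h => h, fun _ => γ.refl _⟩)
      (fun f g h h1 h2 => ⟨fun h => h2.1 (h1.1 h), fun h => γ.trans (h1.2 h) (h2.2 (h1.1 h))⟩)
      ?_ hf
  · exact main.2 hfi
  intro p hp y y' hyy
  refine ⟨hun (hp.col hyy), fun hi => ?_⟩
  refine (hc.ind huv hn (fun a b => β.r a b ∧ (β.r y a → γ.r (e (p v a)) (e (p v b))))
    ?_ ?_ ?_ ?_ hyy).2 (β.refl y)
  · exact fun a b h => ⟨β.symm h.1, fun hb => γ.symm (h.2 (β.trans hb (β.symm h.1)))⟩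
  · exact fun a b c h1 h2 => ⟨β.trans h1.1 h2.1,
      fun ha => γ.trans (h1.2 ha) (h2.2 (β.trans ha h1.1))⟩
  · exact fun a b h => ⟨hc.le h, fun _ => (Tw1.comp he.pol (hp.rowP v)).pres γ h⟩
  · intro g hg
    refine ⟨hg.pres β huv, fun hyg => ?_⟩
    have hq : Tw2 A Eq (fun x z => e (p x (g z))) (fun x z => e (p x (g z))) :=
      he.pol.ap (hp.ap (Tw.proj 0) (hg.ap (Tw.proj 1)))
    rcases he.p1 (hq.rowP v) with hin | hcol
    · exfalso
      refine hP ⟨_, hq, fun _ _ => he.mem _, ?_, hin⟩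
      exact hun (hp.col (β.trans hyg (hg.pres β huv))) hi
    · exact hcol u hu v hv huv

/-- The key lemma for part one. -/
theorem keyK1 (hα : SN α) (hle : ∀ a b, β.r a b → α.r a b) (hc : Cov γ β)
    {f f' : A.carrier → A.carrier} (hf : Tw1 A β.r f f') {a b : A.carrier} (hab : β.r a b)
    (h : γ.r (f a) (f' a)) : γ.r (f b) (f' b) := by
  obtain ⟨e, he⟩ := hc.exists_min
  obtain ⟨u, hu, v, hv, huv, hn⟩ := he.exists_pair
  by_cases hP : HasP e u
  · exact keyK hα hle hc he hu hv huv hn hP (hf.mono hle) hab h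
  have hP' : ¬ HasP e v := fun h => hP (h.move hα (α.symm (hle _ _ huv)))
  have aux : ∀ u ∈ UU e, ∀ v ∈ UU e, β.r u v → ¬ γ.r u v → ¬ HasP e v →
      ∀ f f', Tw1 A β.r f f' → γ.r (f u) (f' u) → γ.r (f v) (f' v) := by
    intro u hu v hv huv hn hP f f' hf h1
    by_contra h2
    obtain ⟨F, F', hF, hFU, hFU', hFi, h1, h2⟩ := reduceU hα hle hc he hu hv huv hf h1 h2
    have e1 : ∀ x, e (F x) = F x := hFU
    have e2 : ∀ x, e (F' x) = F' x := hFU'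
    have := noP hα hle hc he hu hv huv hn hP hF (by simpa [e1] using hFi)
    rw [e1, e2] at this
    exact h2 this
  exact spread hc huv hn (aux u hu v hv huv hn hP')
    (aux v hv u hu (β.symm huv) (fun h => hn (γ.symm h)) hP) hf hab h

/-! ## Centralizers and part one -/

theorem central_of (h : ∀ f f', Tw1 A β.r f f' → ∀ a b, α.r a b → γ.r (f a) (f' a) →
    γ.r (f b) (f' b)) : Centralizes (fun _ : Fin 1 => α) β γ := by
  intro N p hp g a b hab hε
  have h0 := hε (fun _ => false) (fun h => by simpa using congrFun h 0)
  have hg : ∀ i, g i = Fin.last 1 ∨ ∃ j, g i = Fin.castSucc j := by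
    intro i
    rcases Fin.eq_castSucc_or_eq_last (g i) with h | h
    · obtain ⟨j, h⟩ := h
      exact Or.inr ⟨j, h⟩
    · exact Or.inl h
  have hlast : ∀ j : Fin 1, (Fin.castSucc j = Fin.last 1) = False := fun j =>
    eq_false (Fin.castSucc_lt_last j).ne
  have hT : Tw A β.r (fun w : Fin N → A.carrier => p (fun i => if g i = Fin.last 1 then a i else w i))
      (fun w => p (fun i => if g i = Fin.last 1 then b i else w i)) := by
    refine Tw.subst (Tw.ofPol (Tw.of_isPolynomial hp) β)
      (G := fun i w => if g i = Fin.last 1 then a i else w i)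
      (G' := fun i w => if g i = Fin.last 1 then b i else w i) (fun i => ?_)
    by_cases hi : g i = Fin.last 1
    · simp only [hi, if_true]
      refine Tw.const ?_
      have := hab i
      rw [hi] at this
      simpa only [Fin.lastCases_last] using this
    · simp only [hi, if_false]
      exact Tw.proj i
  have key := hybrid (r := α.r) (v := a) (w := fun i => if g i = Fin.last 1 then a i else b i)
    (fun w w' : Fin N → A.carrier =>
      γ.r (p (fun i => if g i = Fin.last 1 then a i else w i))
        (p (fun i => if g i = Fin.last 1 then b i else w i)) →
      γ.r (p (fun i => if g i = Fin.last 1 then a i else w' i))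
        (p (fun i => if g i = Fin.last 1 then b i else w' i)))
    (fun _ h => h) (fun _ _ _ h1 h2 h => h2 (h1 h)) (fun w => w) ?_ ?_ ?_
  · convert key using 2 <;> funext i <;> rcases hg i with h | ⟨j, h⟩ <;> simp only [chooseVec, h, Fin.lastCases_last, Fin.lastCases_castSucc, hlast, if_true, if_false,
      Bool.false_eq_true]
  · intro _ v x c hvc h1
    have := h _ _ (hT.slice β.refl v x) (v x) c hvc
    simp only [Function.update_eq_self] at this
    exact this h1
  · intro i
    rcases hg i with h | ⟨j, h⟩
    · simpa only [h, if_true] using α.refl _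
    · have := hab i
      rw [h] at this
      simpa only [h, hlast, if_false, Fin.lastCases_castSucc] using this
  · convert h0 using 2 <;> funext i <;> rcases hg i with h | ⟨j, h⟩ <;> simp only [chooseVec, h, Fin.lastCases_last, Fin.lastCases_castSucc, hlast, if_true, if_false,
      Bool.false_eq_true]

theorem binComm_le (h : ∀ f f', Tw1 A β.r f f' → ∀ a b, α.r a b → γ.r (f a) (f' a) →
    γ.r (f b) (f' b)) {a b : A.carrier} (hab : (binComm α β).r a b) : γ.r a b :=
  hab γ (central_of h)

theorem binComm_le_right {a b : A.carrier} (hab : (binComm α β).r a b) : β.r a b :=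
  binComm_le (fun _ _ hf _ _ _ _ => hf.rel (β.refl _)) hab

theorem descend (s : ℕ → Con A) (h : ∀ k, s k ≠ Con.bot → (s (k+1)).sz < (s k).sz) :
    ∃ m, s m = Con.bot := by
  by_contra hcon
  push Not at hcon
  have : ∀ k, (s k).sz + k ≤ (s 0).sz := by
    intro k
    induction k with
    | zero => simp
    | succ k ih => have := h k (hcon k); omega
  have := this ((s 0).sz + 1)
  omega

theorem ne_bot (h : β ≠ Con.bot) : ∃ x y, x ≠ y ∧ β.r x y := by
  by_contra hcon
  push Not at hcon
  refine h (Con.ext_r fun a b => ⟨fun hab => ?_, fun hab => ?_⟩)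
  · by_contra hn
    exact hcon a b hn hab
  · cases (hab : a = b)
    exact β.refl a

theorem solvable_of_SN (hα : SN α) : SolvableCon α := by
  have hle : ∀ k a b, (derived α k).r a b → α.r a b := by
    intro k
    induction k with
    | zero => exact fun a b h => h
    | succ k ih => exact fun a b h => ih a b (binComm_le_right h)
  refine descend (derived α) (fun k hk => ?_)
  obtain ⟨x, y, hxy, hr⟩ := ne_bot hk
  obtain ⟨γ, hc⟩ := exists_cov_below hxy hr
  refine Con.sz_lt (fun a b h => binComm_le_right h) ?_
  obtain ⟨a, b, h1, h2⟩ := hc.ne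
  exact ⟨a, b, h1, fun h => h2 (binComm_le (fun f f' hf a b => keyK1 hα (hle k) hc hf) h)⟩

end


/-! ## Taylor algebras: nilpotence -/

section

variable {A : Algebra σ}

theorem Tw.slice2 {R : A.carrier → A.carrier → Prop} {X : Type} [DecidableEq X]
    {F F' : (X → A.carrier) → A.carrier} (h : Tw A R F F') {v v' : X → A.carrier}
    (hv : ∀ y, R (v y) (v' y)) (x : X) :
    Tw1 A R (fun c => F (Function.update v x c)) (fun c => F' (Function.update v' x c)) := by
  refine Tw.subst h (G := fun y w => Function.update v x (w ()) y)
    (G' := fun y w => Function.update v' x (w ()) y) (fun y => ?_)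
  by_cases hy : y = x
  · subst hy
    simpa using Tw.proj (A := A) (R := R) ()
  · simpa [Function.update_of_ne hy] using Tw.const (hv y)

variable [Finite A.carrier] {γ β : Con A} {e : A.carrier → A.carrier}

theorem taylor_hasP (hS : SN (Con.top : Con A)) (ht : HasTaylorTerm A)
    (he : MinSet γ β e) {u v : A.carrier} (hu : u ∈ UU e) (hv : v ∈ UU e) (huv : β.r u v)
    (hn : ¬ γ.r u v) : HasP e u := by
  obtain ⟨n, t, hn1, hid, hty⟩ := ht
  have htT : Tw A Eq (fun w : Fin n → A.carrier => e (t.eval A w))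
    (fun w => e (t.eval A w)) := he.pol.ap (Tw.of_term t)
  by_contra hP
  -- no two coordinates are injective
  have h2 : ∀ i j, i ≠ j →
      Set.InjOn (fun x => e (t.eval A (Function.update (fun _ => u) i x))) (UU e) →
      ¬ Set.InjOn (fun x => e (t.eval A (Function.update (fun _ => u) j x))) (UU e) := by
    intro i j hij hi hj
    refine hP ⟨fun x y => e (t.eval A (Function.update (Function.update (fun _ => u) i x) j y)),
      ?_, fun _ _ => he.mem _, ?_, ?_⟩
    · refine Tw.subst htT
        (G := fun y w => Function.update (Function.update (fun _ => u) i (w 0)) j (w 1) y)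
        (G' := fun y w => Function.update (Function.update (fun _ => u) i (w 0)) j (w 1) y)
        (fun y => ?_)
      by_cases hy : y = j
      · subst hy
        simpa using Tw.proj (A := A) (R := Eq) (X := Fin 2) 1
      · by_cases hy' : y = i
        · subst hy'
          simpa [Function.update_of_ne hy] using Tw.proj (A := A) (R := Eq) (X := Fin 2) 0
        · simpa [Function.update_of_ne hy, Function.update_of_ne hy'] using Tw.const rfl
    · have : ∀ x, Function.update (Function.update (fun _ : Fin n => u) i x) j u =
          Function.update (fun _ => u) i x := by
        intro x
        rw [Function.update_eq_self_iff, Function.update_of_ne hij.symm]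
      simpa [this] using hi
    · simpa using hj
  obtain ⟨i, hi⟩ : ∃ i : Fin n, ∀ j, j ≠ i →
      ¬ Set.InjOn (fun x => e (t.eval A (Function.update (fun _ => u) j x))) (UU e) := by
    by_cases hex : ∃ i : Fin n,
      Set.InjOn (fun x => e (t.eval A (Function.update (fun _ => u) i x))) (UU e)
    · obtain ⟨i, hi⟩ := hex
      exact ⟨i, fun j hj => h2 i j hj.symm hi⟩
    · push Not at hex
      exact ⟨⟨0, hn1⟩, fun j _ => hex j⟩
  have hcol : ∀ (c : A.carrier) (w w' : Fin n → A.carrier),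
      (∀ j, w j ∈ UU e ∧ w' j ∈ UU e ∧ β.r (w j) (w' j)) →
      γ.r (e (t.eval A (Function.update w i c))) (e (t.eval A (Function.update w' i c))) := by
    intro c w w' hw
    refine hybrid (r := fun a b => a ∈ UU e ∧ b ∈ UU e ∧ β.r a b) γ.r γ.refl (fun _ _ _ => γ.trans)
      (fun w => e (t.eval A (Function.update w i c))) ?_ hw
    intro inst w x d hwd
    have hinst : inst = instDecidableEqFin n := Subsingleton.elim _ _
    subst hinst
    by_cases hx : x = i
    · subst hx
      simpa using γ.refl _
    · have hT : Tw1 A (Con.top : Con A).r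
          (fun c' => e (t.eval A (Function.update (Function.update w i c) x c')))
          (fun c' => e (t.eval A (Function.update (fun _ => u) x c'))) :=
        Tw.slice2 (Tw.ofPol htT Con.top) (fun _ => trivial) x
      have hni : ¬ Set.InjOn
          (fun c' => e (t.eval A (Function.update (Function.update w i c) x c'))) (UU e) :=
        fun h => hi x hx (unif hS hT (fun _ _ => he.mem _) (fun _ _ => he.mem _) h)
      have := (he.p1 hT.left).resolve_left hni _ hwd.1 _ hwd.2.1 hwd.2.2
      have e1 : Function.update (Function.update w i c) x (w x) = Function.update w i c := by
        rw [Function.update_eq_self_iff, Function.update_of_ne hx]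
      have e2 : Function.update (Function.update w i c) x d =
          Function.update (Function.update w x d) i c := Function.update_comm (Ne.symm hx) _ _ _
      rwa [e1, e2] at this
  obtain ⟨b1, b2, hb1, hb2, hty⟩ := hty i
  have hty := hty v u
  have huU : e u = u := hu
  have hvU : e v = v := hv
  have s1 := hcol v (fun _ => v) (fun j => if b1 j then v else u) (fun j => by
    by_cases hj : b1 j = true
    · simp only [hj, if_true]; exact ⟨hv, hv, β.refl v⟩
    · simp only [hj]; exact ⟨hv, hu, β.symm huv⟩)
  have s2 := hcol u (fun j => if b2 j then v else u) (fun _ => u) (fun j => by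
    by_cases hj : b2 j = true
    · simp only [hj, if_true]; exact ⟨hv, hu, β.symm huv⟩
    · simp only [hj]; exact ⟨hu, hu, β.refl u⟩)
  rw [show Function.update (fun _ : Fin n => v) i v = fun _ => v by simp,
    show Function.update (fun j => if b1 j then v else u) i v = fun j => if b1 j then v else u by
      simp [hb1], hid, hvU, hty] at s1
  rw [show Function.update (fun _ : Fin n => u) i u = fun _ => u by simp,
    show Function.update (fun j => if b2 j then v else u) i u = fun j => if b2 j then v else u by
      simp [hb2], hid, huU] at s2
  exact hn (γ.symm (γ.trans s1 s2))

/-- the pseudo-Mal'cev operation on a minimal set of a Taylor algebra -/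
theorem taylor_M (hS : SN (Con.top : Con A)) (ht : HasTaylorTerm A) (he : MinSet γ β e) :
    ∃ M, Tw3 A Eq M M ∧ (∀ x y z, M x y z ∈ UU e) ∧
      (∀ x ∈ UU e, ∀ y ∈ UU e, M x y y = x) ∧
      (∀ y ∈ UU e, ∀ z ∈ UU e, M y y z = z) ∧
      (∀ y ∈ UU e, ∀ z ∈ UU e, Set.InjOn (fun x => M x y z) (UU e)) := by
  obtain ⟨u, hu, v, hv, huv, hn⟩ := he.exists_pair
  obtain ⟨M, h1, h2, h3, h4, h5⟩ := (taylor_hasP hS ht he hu hv huv hn).exists_M hS hu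
  exact ⟨M, h1, h2, fun x hx y hy => h3 x hx y hy trivial, fun y hy z hz => h4 y hy trivial z hz,
    fun y hy z hz => h5 y hy trivial z hz trivial⟩

theorem k1 (hS : SN (Con.top : Con A)) (ht : HasTaylorTerm A) (hc : Cov γ β)
    {f f' : A.carrier → A.carrier} (hf : Tw1 A β.r f f') {a b : A.carrier}
    (h : γ.r (f a) (f' a)) : γ.r (f b) (f' b) := by
  by_contra hn
  obtain ⟨e, he⟩ := hc.exists_min
  obtain ⟨u, hu, v, hv, huv, huvn⟩ := he.exists_pair
  have hP := taylor_hasP hS ht he hu hv huv huvn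
  obtain ⟨M, hM, MU, Mr, Ml, Mi⟩ := taylor_M hS ht he
  obtain ⟨κ, hκ, hκU, hκs⟩ := he.p3 hc (hf.rel (β.refl b)) hn
  have hT : Tw1 A β.r (fun x => M (κ (f x)) (κ (f x)) u) (fun x => M (κ (f' x)) (κ (f x)) u) :=
    Tw3.ap (Tw.ofPol hM β) (Tw1.comp (Tw.ofPol hκ β) hf)
      (Tw.ofPol (hκ.comp hf.left) β) (Tw.const (β.refl u))
  have main := twin_ind (α := β) (fun φ φ' => γ.r (φ a) (φ b) → γ.r (φ' a) (φ' b))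
    (fun _ h => h) (fun _ _ _ h1 h2 h => h2 (h1 h)) (fun p hp y y' hy h =>
      keyK hS (fun _ _ _ => trivial) hc he hu hv huv huvn hP
        (hp.row (ρ := Con.top) (x := a) (x' := b) trivial) hy h) hT (by
      rw [Ml _ (hκU _) _ hu, Ml _ (hκU _) _ hu]; exact γ.refl _)
  have hMx : ∀ y z, Tw1 A Eq (fun x => M x y z) (fun x => M x y z) := fun y z =>
    Tw3.ap (X := Unit) hM (Tw.proj ()) (Tw.const rfl) (Tw.const rfl)
  have s1 : γ.r (M (κ (f' a)) (κ (f a)) u) u := by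
    have := (hMx (κ (f a)) u).pres γ (hκ.pres γ (γ.symm h))
    rwa [Ml _ (hκU _) _ hu] at this
  have s2 : γ.r (M (κ (f' b)) (κ (f b)) u) (M (κ (f b)) (κ (f b)) u) := by
    rw [Ml _ (hκU _) _ hu]
    exact γ.trans (γ.symm main) s1
  exact hκs (γ.symm (MinSet.p2 (hMx (κ (f b)) u) (fun _ _ => MU _ _ _) (Mi _ (hκU _) _ hu)
    (hκU _) (hκU _) s2))

theorem kX (hS : SN (Con.top : Con A)) (ht : HasTaylorTerm A) (hc : Cov γ β) {X : Type} [Finite X]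
    {f f' : (X → A.carrier) → A.carrier} (hf : Tw A β.r f f') (a b : X → A.carrier)
    (h : γ.r (f a) (f' a)) : γ.r (f b) (f' b) := by
  refine hybrid (r := fun _ _ => True) (v := a) (w := b)
    (fun a b => γ.r (f a) (f' a) → γ.r (f b) (f' b)) (fun _ h => h)
    (fun _ _ _ h1 h2 h => h2 (h1 h)) (fun w => w) ?_ (fun _ => trivial) h
  intro _ v x c _ h
  have := k1 hS ht hc (hf.slice β.refl v x) (a := v x) (b := c)
  simp only [Function.update_eq_self] at this
  exact this h

theorem nilpotent_of_taylor (hS : SN (Con.top : Con A)) (ht : HasTaylorTerm A) : Nilpotent A := by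
  refine descend (lcs Con.top) (fun k hk => ?_)
  obtain ⟨x, y, hxy, hr⟩ := ne_bot hk
  obtain ⟨γ, hc⟩ := exists_cov_below hxy hr
  refine Con.sz_lt (fun a b h => binComm_le_right h) ?_
  obtain ⟨a, b, h1, h2⟩ := hc.ne
  exact ⟨a, b, h1, fun h => h2 (binComm_le (fun f f' hf a b _ => k1 hS ht hc hf) h)⟩

end


/-! ## Idempotent Taylor algebras: constructing the Mal'cev operation -/

section

variable {A : Algebra σ}

/-- term operations -/
abbrev NoC (A : Algebra σ) : A.carrier → A.carrier → Prop := fun _ _ => False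

theorem term_idem (hid : ∀ (o : σ.ops) (x : A.carrier), A.interp o (fun _ => x) = x) {X : Type}
    {f f' : (X → A.carrier) → A.carrier} (h : Tw A (NoC A) f f') (x : A.carrier) :
    f (fun _ => x) = x := by
  induction h with
  | proj i => rfl
  | const h => exact h.elim
  | app o g g' _ ih => simp only [ih, hid]

/-- a term with variables split in two groups, the second indexed by the elements of `A` -/
def IsPar {X : Type} (P : (X → A.carrier) → (A.carrier → A.carrier) → A.carrier) : Prop :=
  Tw A (NoC A) (X := X ⊕ A.carrier)
        (fun v => P (fun x => v (Sum.inl x)) (fun a => v (Sum.inr a)))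
        (fun v => P (fun x => v (Sum.inl x)) (fun a => v (Sum.inr a)))

theorem IsPar.ap {X Y : Type} {P : (X → A.carrier) → (A.carrier → A.carrier) → A.carrier}
    (hP : IsPar P) {R : A.carrier → A.carrier → Prop}
    {G G' : X → (Y → A.carrier) → A.carrier} {W W' : A.carrier → (Y → A.carrier) → A.carrier}
    (hG : ∀ x, Tw A R (G x) (G' x)) (hW : ∀ a, Tw A R (W a) (W' a)) :
    Tw A R (fun v => P (fun x => G x v) (fun a => W a v))
      (fun v => P (fun x => G' x v) (fun a => W' a v)) :=
  Tw.subst (Tw.ofTerm hP) (G := Sum.elim G W) (G' := Sum.elim G' W') (fun s => by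
    cases s
    · exact hG _
    · exact hW _)

theorem IsPar.idem (hid : ∀ (o : σ.ops) (x : A.carrier), A.interp o (fun _ => x) = x) {X : Type}
    {P : (X → A.carrier) → (A.carrier → A.carrier) → A.carrier} (hP : IsPar P) (x : A.carrier) :
    P (fun _ => x) (fun _ => x) = x := term_idem hid hP x

variable [Finite A.carrier]

/-- `E(x,y)`, the idempotent iterate of `b(·,y)` -/
noncomputable def EE (b : A.carrier → A.carrier → A.carrier) (x y : A.carrier) : A.carrier :=
  (fun z => b z y)^[kk A.carrier + 1] x

theorem unitize (hid : ∀ (o : σ.ops) (x : A.carrier), A.interp o (fun _ => x) = x)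
    (hS : SN (Con.top : Con A)) (ht : HasTaylorTerm A)
    {b : A.carrier → A.carrier → A.carrier} (hb : Tw2 A (NoC A) b b) (y : A.carrier) :
    Function.Injective (fun x => EE b (b x y) x) := by
  intro x x' hxx
  by_contra hne
  obtain ⟨γ, β, hc, hβ, hγ⟩ := exists_cov_pair hne
  have hE : Tw2 A (NoC A) (EE b) (EE b) := hb.iterL _
  have hEβ : Tw2 A β.r (EE b) (EE b) := Tw.ofTerm hE
  have hbβ : Tw2 A β.r b b := Tw.ofTerm hb
  have bi : ∀ x, b x x = x := fun x => term_idem hid hb x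
  have Ei : ∀ x, EE b x x = x := fun x => term_idem hid hE x
  have Ee : ∀ w s, EE b (EE b w s) s = EE b w s := fun w s => kk_spec (fun z => b z s) w
  have P : ∀ {c d : A.carrier}, β.r c d → Tw A β.r (X := Unit) (fun _ => c) (fun _ => d) :=
    fun h => Tw.const h
  have V : Tw A β.r (X := Unit) (fun v => v ()) (fun v => v ()) := Tw.proj ()
  -- step (1)
  have s1 : γ.r x (EE b (b x' x) x') := by
    have hT : Tw1 A β.r (fun y => EE b (b x y) x) (fun y => EE b (b x' y) x') :=
      hEβ.ap (hbβ.ap (P hβ) V) (P hβ)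
    have := k1 hS ht hc hT (a := y) (b := x) (by
      have h : EE b (b x y) x = EE b (b x' y) x' := hxx
      rw [h]; exact γ.refl _)
    simpa only [bi, Ei] using this
  -- step (2)
  have s2 : ∀ w, γ.r (EE b (EE b w x') x) (EE b w x) := by
    intro w
    have hT : Tw1 A β.r (fun w => EE b (EE b w x') x) (fun w => EE b (EE b w x) x) :=
      hEβ.ap (hEβ.ap V (P (β.symm hβ))) (P (β.refl x))
    have := k1 hS ht hc hT (a := x') (b := w) (by
      rw [Ei x', Ee]; exact γ.refl _)
    simpa only [Ee] using this
  have pE : ∀ s, Tw1 A Eq (fun w => EE b w s) (fun w => EE b w s) := fun s =>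
    Tw2.colP (Tw.ofTerm hE) s
  have pb : Tw1 A Eq (fun w => b w x) (fun w => b w x) := Tw2.colP (Tw.ofTerm hb) x
  -- step (3)
  have s3 : γ.r x (EE b (b x' x) x) := by
    have := (pE x).pres γ s1
    rw [Ei] at this
    exact γ.trans this (s2 _)
  -- step (4)
  have s4 : γ.r x (EE b x' x) := by
    have h := (pb.iter (kk A.carrier)).pres γ s3
    have e1 : (fun w => b w x)^[kk A.carrier] x = x :=
      Function.iterate_fixed (f := fun w => b w x) (bi x) _
    have e2 : (fun w => b w x)^[kk A.carrier] (EE b (b x' x) x) = EE b x' x := by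
      rw [← Ee x' x]
      unfold EE
      rw [← Function.iterate_add_apply, ← Function.iterate_add_apply]
      have : (fun w => b w x)^[kk A.carrier + 1 + (kk A.carrier + 1)] x' =
        (fun w => b w x)^[kk A.carrier + (kk A.carrier + 1) + 1] x' := by congr 1; ring_nf
      rw [this, Function.iterate_succ_apply]
    rwa [e1, e2] at h
  -- step (5)
  have s5 : γ.r (EE b x x') (EE b (b x' x) x') := by
    have hx : β.r x (b x' x) := by
      have := Tw1.rel (β := β) (f := fun w => b w x) (f' := fun w => b w x)
        (hbβ.ap (X := Unit) (Tw.proj ()) (Tw.const (β.refl x))) hβ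
      rwa [bi] at this
    have hT : Tw1 A β.r (fun s => EE b x s) (fun s => EE b (b x' x) s) := hEβ.ap (P hx) V
    exact k1 hS ht hc hT (a := x) (b := x') (by rw [Ei]; exact s3)
  -- step (6)
  have s6 : γ.r (EE b x x') x' := by
    have hT : Tw1 A β.r (fun s => EE b x s) (fun s => EE b x' s) := hEβ.ap (P hβ) V
    have := k1 hS ht hc hT (a := x) (b := x') (by rw [Ei]; exact s4)
    rwa [Ei] at this
  exact hγ (γ.trans s1 (γ.trans (γ.symm s5) s6))

/-- ternary terms with `d(x,y,y) = x` -/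
def DD (A : Algebra σ) (d : A.carrier → A.carrier → A.carrier → A.carrier) : Prop :=
  Tw3 A (NoC A) d d ∧ ∀ x y, d x y y = x

theorem DD.inj (hS : SN (Con.top : Con A)) {d : A.carrier → A.carrier → A.carrier → A.carrier}
    (hd : DD A d) (y z : A.carrier) : Function.Injective (fun x => d x y z) := by
  have hT : Tw1 A (Con.top : Con A).r (fun x => d x y y) (fun x => d x y z) :=
    Tw3.ap (X := Unit) (Tw.ofTerm hd.1) (Tw.proj ()) (Tw.const trivial) (Tw.const trivial)
  have := unif hS hT (U := Set.univ) (fun _ _ => trivial) (fun _ _ => trivial)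
    (fun a _ b _ h => by simpa [hd.2] using h)
  exact Set.injOn_univ.mp this

theorem DD.proj : DD A (fun x _ _ => x) := ⟨Tw.proj 0, fun _ _ => rfl⟩

theorem DD.comp {d d' : A.carrier → A.carrier → A.carrier → A.carrier} (hd : DD A d)
    (hd' : DD A d') : DD A (fun x y z => d' (d x y z) (d y y z) z) :=
  ⟨hd'.1.ap hd.1 (hd.1.ap (Tw.proj 1) (Tw.proj 1) (Tw.proj 2)) (Tw.proj 2),
    fun x y => by simp only [hd.2, hd'.2]⟩

theorem DD.comp2 {d d' : A.carrier → A.carrier → A.carrier → A.carrier} (hd : DD A d)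
    (hd' : DD A d') : DD A (fun x y z => d' (d x y z) y z) :=
  ⟨hd'.1.ap hd.1 (Tw.proj 1) (Tw.proj 2), fun x y => by simp only [hd.2, hd'.2]⟩

theorem DD.iter {d d' : A.carrier → A.carrier → A.carrier → A.carrier} (hd : DD A d)
    (hd' : DD A d') (k : ℕ) : DD A (fun x y z => (fun w => d' w y z)^[k] (d x y z)) := by
  refine ⟨Tw.iter (X := Fin 3) (F := fun v w => d' w (v 1) (v 2)) (F' := fun v w => d' w (v 1) (v 2))
    (fun _ _ ha => hd'.1.ap ha (Tw.proj 1) (Tw.proj 2)) k hd.1, fun x y => ?_⟩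
  simp only [hd.2, hd'.2]
  exact Function.iterate_fixed rfl k

variable {γ β : Con A} {e : A.carrier → A.carrier}

theorem lemmaN (hid : ∀ (o : σ.ops) (x : A.carrier), A.interp o (fun _ => x) = x)
    (hS : SN (Con.top : Con A)) (ht : HasTaylorTerm A) (hc : Cov γ β) (he : MinSet γ β e)
    {u v : A.carrier} (hu : u ∈ UU e) (hv : v ∈ UU e) (huv : β.r u v) (hn : ¬ γ.r u v) :
    ∃ d, DD A d ∧ ¬ γ.r (d u u v) u := by
  obtain ⟨p, hp, hU, i1, i2⟩ := taylor_hasP hS ht he hu hv huv hn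
  obtain ⟨P₀, hP₀, hpP₀⟩ := Tw.exists_param hp
  have hP₀ : IsPar P₀ := hP₀
  set k := kk A.carrier with hk
  -- `P x z w`
  let P : A.carrier → A.carrier → (A.carrier → A.carrier) → A.carrier := fun x z w => P₀ ![x, z] w
  have hpP : ∀ x z, p x z = P x z (fun a => a) := fun x z => hpP₀ ![x, z]
  have hP : ∀ {Y : Type} {R : A.carrier → A.carrier → Prop}
      {g g' h h' : (Y → A.carrier) → A.carrier} {W W' : A.carrier → (Y → A.carrier) → A.carrier},
      Tw A R g g' → Tw A R h h' → (∀ a, Tw A R (W a) (W' a)) →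
      Tw A R (fun v => P (g v) (h v) (fun a => W a v)) (fun v => P (g' v) (h' v) (fun a => W' a v)) := by
    intro Y R g g' h h' W W' h1 h2 h3
    have := hP₀.ap (G := ![g, h]) (G' := ![g', h']) (W := W) (W' := W') (R := R)
      (fun i => by fin_cases i <;> assumption) h3
    convert this using 3 with v
    · ext i; fin_cases i <;> rfl
    · ext i; fin_cases i <;> rfl
  have Pi : ∀ x, P x x (fun _ => x) = x := by
    intro x
    have := hP₀.idem hid x
    convert this using 2
    ext i; fin_cases i <;> rfl
  let b : A.carrier → A.carrier → A.carrier := fun x y => P x y (fun _ => y)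
  have hb : Tw2 A (NoC A) b b := hP (Tw.proj 0) (Tw.proj 1) (fun _ => Tw.proj 1)
  have hE : Tw2 A (NoC A) (EE b) (EE b) := hb.iterL _
  let s : A.carrier → A.carrier → A.carrier → A.carrier := fun x z y => EE b (P x z (fun _ => y)) x
  have hs : Tw3 A (NoC A) s s :=
    hE.ap (hP (Tw.proj 0) (Tw.proj 1) (fun _ => Tw.proj 2)) (Tw.proj 0)
  have sinj : ∀ y, Function.Injective (fun x => s x y y) := fun y => unitize hid hS ht hb y
  have skk : ∀ y x, (fun x => s x y y)^[k + 1] x = x := fun y x =>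
    kk_id (U := Set.univ) (fun _ _ => trivial) ((sinj y).injOn) trivial
  refine ⟨fun x y z => (fun x => s x y y)^[k] (s x z y), ⟨?_, ?_⟩, ?_⟩
  · exact Tw.iter (X := Fin 3) (F := fun v w => s w (v 1) (v 1)) (F' := fun v w => s w (v 1) (v 1))
      (fun _ _ ha => hs.ap ha (Tw.proj 1) (Tw.proj 1)) k
      (hs.ap (Tw.proj 0) (Tw.proj 2) (Tw.proj 1))
  · intro x y
    have := skk y x
    rwa [Function.iterate_succ_apply] at this
  · intro htriv
    have si : ∀ x, s x x x = x := fun x => term_idem hid hs x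
    have q1 : γ.r (s u v u) u := by
      have hT : Tw1 A Eq (fun x => s x u u) (fun x => s x u u) :=
        Tw3.ap (X := Unit) (Tw.ofTerm hs) (Tw.proj ()) (Tw.const rfl) (Tw.const rfl)
      have := hT.pres γ htriv
      simp only [si] at this
      have e1 := skk u (s u v u)
      rw [Function.iterate_succ_apply'] at e1
      rwa [e1] at this
    have hT : Tw A β.r (X := A.carrier)
        (fun w => (fun x => P x u w)^[k + 1] (P u v w))
        (fun w => (fun x => P x u w)^[k + 1] (P u u w)) := by
      refine Tw.iter (F := fun w x => P x u w) (F' := fun w x => P x u w) (fun a a' ha => ?_) (k + 1) ?_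
      · exact hP ha (Tw.constC β u) (fun a => Tw.proj a)
      · exact hP (Tw.constC β u) (Tw.const (β.symm huv)) (fun a => Tw.proj a)
    have q2 := kX hS ht hc hT (fun _ => u) (fun a => a) (by
      have e1 : (fun x => P x u (fun _ => u))^[k + 1] (P u u (fun _ => u)) = u := by
        rw [Pi]
        exact Function.iterate_fixed (f := fun x => P x u (fun _ => u)) (Pi u) _
      rw [e1]
      exact q1)
    simp only [← hpP] at q2
    have hcol : ∀ x ∈ UU e, (fun x => p x u) x ∈ UU e := fun x _ => hU _ _
    rw [kk_id hcol i1 (hU _ _), kk_id hcol i1 (hU _ _)] at q2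
    exact hn (γ.symm (MinSet.p2 (hp.rowP u) (fun x _ => hU _ _) i2 hv hu q2))

theorem lemmaD3 (hid : ∀ (o : σ.ops) (x : A.carrier), A.interp o (fun _ => x) = x)
    (hS : SN (Con.top : Con A)) (ht : HasTaylorTerm A) (hc : Cov γ β)
    {w z : A.carrier} (hwz : β.r w z) (hn : ¬ γ.r w z) :
    ∃ d, DD A d ∧ ¬ γ.r (d w w z) w := by
  obtain ⟨e, he⟩ := hc.exists_min
  obtain ⟨κ, hκ, hκU, hκs⟩ := he.p3 hc hwz hn
  obtain ⟨d, hd, hdn⟩ := lemmaN hid hS ht hc he (hκU w) (hκU z) (hκ.pres β hwz) hκs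
  obtain ⟨K₀, hK₀, hK⟩ := Tw.exists_param hκ
  have hK₀ : IsPar K₀ := hK₀
  have hK : ∀ x, κ x = K₀ (fun _ => x) (fun a => a) := fun x => hK (fun _ => x)
  refine ⟨fun x y z => d x (K₀ (fun _ => y) (fun _ => x)) (K₀ (fun _ => z) (fun _ => x)),
    ⟨?_, fun x y => hd.2 _ _⟩, fun htriv => hdn ?_⟩
  · exact hd.1.ap (Tw.proj 0) (hK₀.ap (fun _ => Tw.proj 1) (fun _ => Tw.proj 0))
      (hK₀.ap (fun _ => Tw.proj 2) (fun _ => Tw.proj 0))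
  · have hdβ : Tw3 A β.r d d := Tw.ofTerm hd.1
    have hT : Tw A β.r (X := Option A.carrier)
        (fun v => d (v none) (K₀ (fun _ => w) (fun a => v (some a)))
          (K₀ (fun _ => z) (fun a => v (some a))))
        (fun v => d (v none) (K₀ (fun _ => w) (fun a => v (some a)))
          (K₀ (fun _ => w) (fun a => v (some a)))) :=
      hdβ.ap (Tw.proj none) (hK₀.ap (fun _ => Tw.constC β w) (fun a => Tw.proj (some a)))
        (hK₀.ap (fun _ => Tw.const (β.symm hwz)) (fun a => Tw.proj (some a)))
    have := kX hS ht hc hT (fun _ => w) (fun o => o.elim (κ w) (fun a => a)) (by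
      simp only [hd.2]
      exact htriv)
    simp only [Option.elim, ← hK, hd.2] at this
    exact this

theorem lemmaP (hS : SN (Con.top : Con A)) (ht : HasTaylorTerm A) (hc : Cov γ β) {X : Type} [Finite X]
    {F F' G G' : (X → A.carrier) → A.carrier} (hF : Tw A β.r F F') (hG : Tw A β.r G G')
    (a b : X → A.carrier) (h1 : F a = G a) (h2 : F' a = G' a) (h3 : F b = G b) :
    γ.r (F' b) (G' b) := by
  by_contra hn
  obtain ⟨e, he⟩ := hc.exists_min
  obtain ⟨o, ho, -⟩ := he.exists_pair
  obtain ⟨M, hM, MU, Mr, Ml, Mi⟩ := taylor_M hS ht he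
  have hβ : β.r (F' b) (G' b) := by
    have e1 := hF.rel (v := b) (v' := b) (fun _ => β.refl _)
    have e2 := hG.rel (v := b) (v' := b) (fun _ => β.refl _)
    rw [h3] at e1
    exact β.trans (β.symm e1) e2
  obtain ⟨κ, hκ, hκU, hκs⟩ := he.p3 hc hβ hn
  have hκβ : Tw1 A β.r κ κ := Tw1.ofPol hκ β
  have hT : Tw A β.r (fun v => M (κ (F v)) (κ (G v)) o) (fun v => M (κ (F' v)) (κ (G' v)) o) :=
    Tw3.ap (Tw.ofPol hM β) (hκβ.ap hF) (hκβ.ap hG) (Tw.constC β o)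
  have q := kX hS ht hc hT a b (by
    rw [h1, h2, Ml _ (hκU _) _ ho, Ml _ (hκU _) _ ho]; exact γ.refl _)
  rw [h3, Ml _ (hκU _) _ ho] at q
  have q2 : γ.r (M (κ (F' b)) (κ (G' b)) o) (M (κ (G' b)) (κ (G' b)) o) := by
    rw [Ml _ (hκU _) _ ho]; exact γ.symm q
  have hMx : Tw1 A Eq (fun x => M x (κ (G' b)) o) (fun x => M x (κ (G' b)) o) :=
    Tw3.ap (X := Unit) hM (Tw.proj ()) (Tw.const rfl) (Tw.const rfl)
  exact hκs (MinSet.p2 hMx (fun _ _ => MU _ _ _) (Mi _ (hκU _) _ ho) (hκU _) (hκU _) q2)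

theorem lemmaD4 (hid : ∀ (o : σ.ops) (x : A.carrier), A.interp o (fun _ => x) = x)
    (hS : SN (Con.top : Con A)) (ht : HasTaylorTerm A) (hc : Cov γ β)
    {w z : A.carrier} (hwz : β.r w z) : ∃ d, DD A d ∧ γ.r (d w w z) z := by
  by_cases hn : γ.r w z
  · exact ⟨_, DD.proj, hn⟩
  obtain ⟨d₁, hd₁, hd₁n⟩ := lemmaD3 hid hS ht hc hwz hn
  have hd₁β : Tw3 A β.r d₁ d₁ := Tw.ofTerm hd₁.1
  have hw1 : β.r w (d₁ w w z) := by
    have := Tw1.rel (β := β) (f := fun x => d₁ w w x) (f' := fun x => d₁ w w x)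
      (hd₁β.ap (X := Unit) (Tw.constC β w) (Tw.constC β w) (Tw.proj ())) hwz
    simpa only [hd₁.2] using this
  refine (hc.ind hw1 (fun h => hd₁n (γ.symm h))
    (fun a b => (∃ d, DD A d ∧ γ.r (d w w z) a) ↔ ∃ d, DD A d ∧ γ.r (d w w z) b)
    (fun _ _ h => h.symm) (fun _ _ _ h h' => h.trans h') ?_ ?_ hwz).1 ⟨_, DD.proj, γ.refl w⟩
  · intro a b hab
    exact ⟨fun ⟨d, hd, h⟩ => ⟨d, hd, γ.trans h hab⟩,
      fun ⟨d, hd, h⟩ => ⟨d, hd, γ.trans h (γ.symm hab)⟩⟩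
  intro g hg
  obtain ⟨G₀, hG₀, hG⟩ := Tw.exists_param hg
  have hG₀ : IsPar G₀ := hG₀
  have hG : ∀ x, g x = G₀ (fun _ => x) (fun a => a) := fun x => hG (fun _ => x)
  have Gi : ∀ x, G₀ (fun _ => x) (fun _ => x) = x := fun x => hG₀.idem hid x
  let dg : A.carrier → A.carrier → A.carrier → A.carrier := fun x y z =>
    G₀ (fun _ => d₁ x y z) (fun _ => x)
  have hdg : DD A dg := by
    refine ⟨hG₀.ap (fun _ => hd₁.1) (fun _ => Tw.proj 0), fun x y => ?_⟩
    show G₀ (fun _ => d₁ x y y) (fun _ => x) = x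
    rw [hd₁.2]
    exact Gi x
  have hdgβ : Tw3 A β.r dg dg := Tw.ofTerm hdg.1
  have key : γ.r (g (d₁ w w z)) (dg (g w) w z) := by
    have hF : Tw A β.r (X := Option A.carrier)
        (fun v => G₀ (fun _ => d₁ (v none) w w) (fun a => v (some a)))
        (fun v => G₀ (fun _ => d₁ (v none) w z) (fun a => v (some a))) :=
      hG₀.ap (fun _ => hd₁β.ap (Tw.proj none) (Tw.constC β w) (Tw.const hwz))
        (fun a => Tw.proj (some a))
    have hGG : Tw A β.r (X := Option A.carrier)
        (fun v => dg (G₀ (fun _ => v none) (fun a => v (some a))) w w)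
        (fun v => dg (G₀ (fun _ => v none) (fun a => v (some a))) w z) :=
      hdgβ.ap (hG₀.ap (fun _ => Tw.proj none) (fun a => Tw.proj (some a))) (Tw.constC β w)
        (Tw.const hwz)
    have := lemmaP hS ht hc hF hGG (fun _ => w) (fun o => o.elim w (fun a => a))
      (by simp only [hd₁.2, hdg.2]) (by simp only [Gi]; rfl)
      (by simp only [hd₁.2, hdg.2])
    simp only [Option.elim, ← hG] at this
    exact this
  have hpol : Tw1 A Eq (fun x => dg x w z) (fun x => dg x w z) :=
    Tw3.ap (X := Unit) (Tw.ofTerm hdg.1) (Tw.proj ()) (Tw.const rfl) (Tw.const rfl)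
  constructor
  · rintro ⟨d, hd, h⟩
    exact ⟨_, hd.comp2 hdg, γ.trans (hpol.pres γ h) (γ.symm key)⟩
  · rintro ⟨d, hd, h⟩
    refine ⟨_, hd.iter hdg (kk A.carrier), ?_⟩
    have := (hpol.iter (kk A.carrier)).pres γ (γ.trans h key)
    have e1 : (fun x => dg x w z)^[kk A.carrier] (dg (g w) w z) = g w := by
      have := kk_id (h := fun x => dg x w z) (U := Set.univ) (fun _ _ => trivial)
        ((hdg.inj hS w z).injOn) (x := g w) trivial
      rwa [Function.iterate_succ_apply] at this
    rwa [e1] at this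

theorem lemmaD5 (hid : ∀ (o : σ.ops) (x : A.carrier), A.interp o (fun _ => x) = x)
    (hS : SN (Con.top : Con A)) (ht : HasTaylorTerm A) (w z : A.carrier) :
    ∃ d, DD A d ∧ d w w z = z := by
  obtain ⟨δ, ⟨d, hd, hδ⟩, hmin⟩ := Set.exists_min_image
    {δ : Con A | ∃ d, DD A d ∧ δ.r (d w w z) z} Con.sz (Set.toFinite _)
    ⟨Con.top, _, DD.proj, trivial⟩
  by_contra hcon
  have hne : d w w z ≠ z := fun h => hcon ⟨d, hd, h⟩
  obtain ⟨γ, hc⟩ := exists_cov_below hne hδ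
  obtain ⟨d', hd', h'⟩ := lemmaD4 hid hS ht hc hδ
  have := hmin γ ⟨_, hd.comp hd', h'⟩
  exact absurd this (not_le.mpr (Con.sz_lt (fun _ _ h => hc.le h) hc.ne))

theorem lemmaD6 (hid : ∀ (o : σ.ops) (x : A.carrier), A.interp o (fun _ => x) = x)
    (hS : SN (Con.top : Con A)) (ht : HasTaylorTerm A) :
    ∃ d, DD A d ∧ ∀ y z, d y y z = z := by
  classical
  have := Fintype.ofFinite A.carrier
  have key : ∀ s : Finset (A.carrier × A.carrier), ∃ d, DD A d ∧ ∀ q ∈ s, d q.1 q.1 q.2 = q.2 := by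
    intro s
    induction s using Finset.induction_on with
    | empty => exact ⟨_, DD.proj, by simp⟩
    | insert q s hq ih =>
      obtain ⟨d, hd, hs⟩ := ih
      obtain ⟨d', hd', h'⟩ := lemmaD5 hid hS ht (d q.1 q.1 q.2) q.2
      refine ⟨_, hd.comp hd', fun r hr => ?_⟩
      rcases Finset.mem_insert.mp hr with rfl | hr
      · exact h'
      · simp only [hs r hr, hd'.2]
  obtain ⟨d, hd, h⟩ := key Finset.univ
  exact ⟨d, hd, fun y z => h (y, z) (Finset.mem_univ _)⟩

end

/-! ## The idempotent reduct -/

/-- the signature with a single operation symbol -/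
def oneSig (n : ℕ) : Signature := ⟨Unit, fun _ => n⟩

/-- the reduct to one term -/
def oneRed {n : ℕ} (A : Algebra σ) (t : Term σ (Fin n)) : Algebra (oneSig n) :=
  ⟨A.carrier, fun _ x => t.eval A x⟩

theorem pol_red {n : ℕ} (A : Algebra σ) (t : Term σ (Fin n)) {N : ℕ}
    {p : (Fin N → (oneRed A t).carrier) → (oneRed A t).carrier}
    (h : IsPolynomial (oneRed A t) p) : @IsPolynomial σ A N p := by
  induction h with
  | proj i => exact IsPolynomial.proj (A := A) i
  | const a => exact IsPolynomial.const (A := A) a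
  | app o g _ ih =>
    have key : ∀ s : Term σ (Fin n), IsPolynomial A (fun x => s.eval A (fun j => g j x)) := by
      intro s
      induction s with
      | var j => exact ih j
      | app o' s ihs => exact IsPolynomial.app o' _ ihs
    exact key t

theorem tw_red {n : ℕ} (A : Algebra σ) (t : Term σ (Fin n)) {X : Type}
    {f f' : (X → (oneRed A t).carrier) → (oneRed A t).carrier}
    (h : Tw (oneRed A t) (fun _ _ => False) f f') :
    @Tw σ A (fun _ _ => False) X f f' := by
  induction h with
  | proj i => exact Tw.proj (A := A) i
  | const h => exact h.elim
  | app o g g' _ ih => exact Tw.subst (A := A) (Tw.of_term t) ih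

theorem malcev_of_taylor {A : Algebra σ} [hfin : Finite A.carrier] (hS : SN (Con.top : Con A))
    (ht : HasTaylorTerm A) : HasMalcevTerm A := by
  obtain ⟨n, t, hn, hid, hty⟩ := ht
  have : Finite (oneRed A t).carrier := hfin
  have hS' : SN (Con.top : Con (oneRed A t)) := by
    obtain ⟨m, hm⟩ := hS
    refine ⟨m, ?_⟩
    intro N p hp g a b _ h
    refine hm N p (pol_red A t hp) g a b (fun i => ?_) h
    have : (Fin.lastCases (motive := fun _ => Con A) Con.top (fun _ => Con.top) (g i)) =
        Con.top := by
      refine Fin.lastCases ?_ ?_ (g i)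
      · simp
      · intro j; simp
    rw [this]
    trivial
  have ht' : HasTaylorTerm (oneRed A t) :=
    ⟨n, Term.app (σ := oneSig n) () (fun i => Term.var i), hn, hid, hty⟩
  obtain ⟨d, ⟨hd, h1⟩, h2⟩ := lemmaD6 (A := oneRed A t) (fun _ x => hid x) hS' ht'
  obtain ⟨s, hs⟩ := (tw_red A t hd).exists_term
  refine ⟨s, fun a b => ⟨?_, ?_⟩⟩
  · rw [hs]; exact h1 a b
  · rw [hs]; exact h2 b a


/-- Corollary 4.4 of "On Supernilpotent Algebras": in a finite algebra every
supernilpotent congruence is solvable; consequently a finite supernilpotent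
Taylor algebra has a Mal'cev term and is nilpotent. -/
theorem finite_supernilpotent_solvable {σ : Signature} (A : Algebra σ)
    (hfin : Finite A.carrier) :
    (∀ α : Con A, (∃ n, 2 ≤ n ∧ nfold α n = Con.bot) → SolvableCon α) ∧
    ((∃ n, 2 ≤ n ∧ Supernilpotent A n) → HasTaylorTerm A →
      HasMalcevTerm A ∧ Nilpotent A) := by
  refine ⟨fun α ⟨n, hn, h⟩ => solvable_of_SN (SN.of_nfold hn h), ?_⟩
  rintro ⟨n, hn, h⟩ ht
  have hS : SN (Con.top : Con A) := SN.of_nfold hn h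
  exact ⟨malcev_of_taylor hS ht, nilpotent_of_taylor hS ht⟩

end UA
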